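/- Let k ≥ 1 and let F be an automorphism of ℂ^k with an attracting fixed point at 0. Then there exists ε > 0 such that for every sequence f_1, f_2, … of automorphisms of ℂ^k satisfying ‖F(z) − f_n(z)‖ < ε for every n ∈ ℕ and every z in the open unit ball B, there exists an open neighborhood N of 0 such that the closure of f_n(N) is a compact subset of N for every n, and the basin of attraction ⋃_{n≥1} f(n)^{-1}(N) is biholomorphic to ℂ^k. -/

import Mathlib

open Metric Filter Topology

noncomputable section

/-- `ℂ^k` with the Euclidean norm. -/
abbrev Ck (k : ℕ) := EuclideanSpace ℂ (Fin k)

/-- `seqComp f n = f_{n-1} ∘ ⋯ ∘ f_0` (so `seqComp f n` is the composition of the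
first `n` maps of the sequence). -/
def seqComp {α : Type*} (f : ℕ → α → α) : ℕ → α → α
  | 0 => id
  | n + 1 => f n ∘ seqComp f n

/-- An automorphism of `ℂ^k`: a bijective holomorphic map with holomorphic inverse. -/
def IsAutomorphism {k : ℕ} (F : Ck k → Ck k) : Prop :=
  Differentiable ℂ F ∧ ∃ Finv : Ck k → Ck k, Differentiable ℂ Finv ∧
    Function.LeftInverse Finv F ∧ Function.RightInverse Finv F

/-- A set `Ω ⊆ ℂ^k` is biholomorphic to `ℂ^k`: there is a bijective holomorphic map
`Ψ : Ω → ℂ^k` with holomorphic inverse `Φ`. -/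
def BiholoToC {k : ℕ} (Ω : Set (Ck k)) : Prop :=
  ∃ (Ψ Φ : Ck k → Ck k),
    DifferentiableOn ℂ Ψ Ω ∧ Differentiable ℂ Φ ∧
    (∀ w, Φ w ∈ Ω) ∧ (∀ z ∈ Ω, Φ (Ψ z) = z) ∧ (∀ w, Ψ (Φ w) = w)

theorem exists_triang_basis (n : ℕ) : ∀ (V : Type) [AddCommGroup V] [Module ℂ V]
    [FiniteDimensional ℂ V] (_ : Module.finrank ℂ V = n) (A : V →ₗ[ℂ] V),
    ∃ b : Module.Basis (Fin n) ℂ V, ∀ i j, j < i → b.repr (A (b j)) i = 0 := by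
  induction n with
  | zero =>
    intro V _ _ _ h A
    exact ⟨Module.finBasisOfFinrankEq ℂ V h, fun i => i.elim0⟩
  | succ n ih =>
    intro V _ _ _ h A
    have : Nontrivial V := Module.nontrivial_of_finrank_pos (R := ℂ) (by omega)
    obtain ⟨μ, hμ⟩ := Module.End.exists_eigenvalue (K := ℂ) (V := V) A
    have hlt : LinearMap.range (A - μ • LinearMap.id) < ⊤ := by
      rw [lt_top_iff_ne_top]
      intro htop
      have hinj := LinearMap.injective_iff_surjective.mpr (LinearMap.range_eq_top.mp htop)
      obtain ⟨v, hv⟩ := hμ.exists_hasEigenvector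
      apply hv.2
      apply hinj
      have := hv.apply_eq_smul
      simp [this]
    obtain ⟨φ, hφ0, hφ⟩ := Submodule.exists_le_ker_of_lt_top _ hlt
    have hfr := Module.Dual.finrank_ker_add_one_of_ne_zero (f := φ) hφ0
    have hinv : ∀ x ∈ LinearMap.ker φ, A x ∈ LinearMap.ker φ := by
      intro x hx
      have h1 : (A - μ • (LinearMap.id : V →ₗ[ℂ] V)) x ∈ LinearMap.ker φ := hφ ⟨x, rfl⟩
      have h2 : A x = (A - μ • (LinearMap.id : V →ₗ[ℂ] V)) x + μ • x := by simp
      rw [h2]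
      exact Submodule.add_mem _ h1 (Submodule.smul_mem _ _ hx)
    obtain ⟨b, hb⟩ := ih (LinearMap.ker φ) (by omega) (A.restrict hinv)
    obtain ⟨y, hy⟩ : ∃ y, φ y ≠ 0 := by
      by_contra hcon
      push Not at hcon
      exact hφ0 (LinearMap.ext hcon)
    have hli : ∀ (c : ℂ), ∀ x ∈ LinearMap.ker φ, c • y + x = 0 → c = 0 := by
      intro c x hx h0
      have := congrArg φ h0
      rw [map_add, LinearMap.mem_ker.mp hx] at this
      simpa [hy] using this
    have hsp : ∀ z : V, ∃ c : ℂ, z + c • y ∈ LinearMap.ker φ := by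
      intro z
      refine ⟨-(φ z / φ y), ?_⟩
      rw [LinearMap.mem_ker]
      simp [hy]
    refine ⟨Module.Basis.mkFinSnoc b y hli hsp, ?_⟩
    set B := Module.Basis.mkFinSnoc b y hli hsp with hB
    have hBc : ∀ j : Fin n, B (Fin.castSucc j) = (b j : V) := by
      intro j; simp [hB, Module.Basis.coe_mkFinSnoc]
    intro i j hij
    obtain ⟨j', rfl⟩ : ∃ j', j = Fin.castSucc j' := by
      refine ⟨⟨j, ?_⟩, by ext; rfl⟩
      have := i.2; have : (j : ℕ) < i := hij; omega
    have e1 : A (B (Fin.castSucc j')) = ∑ l, (b.repr (A.restrict hinv (b j')) l) • B (Fin.castSucc l) := by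
      have := congrArg (Submodule.subtype _) (b.sum_repr (A.restrict hinv (b j')))
      simp only [map_sum, map_smul] at this
      rw [hBc]
      simp only [hBc]
      exact this.symm
    rw [e1]
    simp only [map_sum, map_smul, Module.Basis.repr_self, Finsupp.coe_finsetSum, Finset.sum_apply,
      Finsupp.coe_smul, Pi.smul_apply, smul_eq_mul]
    apply Finset.sum_eq_zero
    intro l _
    by_cases hl : Fin.castSucc l = i
    · subst hl
      rw [hb l j' (by simpa using hij)]
      simp
    · simp [Finsupp.single_apply, hl]

theorem exists_almost_diag {n : ℕ} {V : Type} [AddCommGroup V] [Module ℂ V]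
    [FiniteDimensional ℂ V] (hV : Module.finrank ℂ V = n) (A : V →ₗ[ℂ] V) :
    ∃ lam : Fin n → ℂ, (∀ j, Module.End.HasEigenvalue A (lam j)) ∧
      ∀ η : ℝ, 0 < η → ∃ b : Module.Basis (Fin n) ℂ V, ∀ i j,
        ‖b.repr (A (b j)) i - (if i = j then lam j else 0)‖ ≤ η := by
  obtain ⟨b, hb⟩ := exists_triang_basis n V hV A
  refine ⟨fun j => b.repr (A (b j)) j, ?_, ?_⟩
  · intro j
    rw [Module.End.hasEigenvalue_iff_isRoot_charpoly, ← LinearMap.charpoly_toMatrix A b,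
      Matrix.charpoly_of_isUpperTriangular]
    · rw [Polynomial.IsRoot, Polynomial.eval_prod]
      apply Finset.prod_eq_zero (Finset.mem_univ j)
      simp [LinearMap.toMatrix_apply]
    · intro i j hij
      rw [LinearMap.toMatrix_apply]
      exact hb i j hij
  · intro η hη
    set C : ℝ := 1 + ∑ i, ∑ j, ‖b.repr (A (b j)) i‖ with hC
    have hC1 : 1 ≤ C := by
      have : 0 ≤ ∑ i, ∑ j, ‖b.repr (A (b j)) i‖ := by positivity
      linarith
    have hCb : ∀ i j, ‖b.repr (A (b j)) i‖ ≤ C := by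
      intro i j
      have h1 : ‖b.repr (A (b j)) i‖ ≤ ∑ j, ‖b.repr (A (b j)) i‖ :=
        Finset.single_le_sum (f := fun j => ‖b.repr (A (b j)) i‖) (fun _ _ => norm_nonneg _) (Finset.mem_univ j)
      have h2 : ∑ j, ‖b.repr (A (b j)) i‖ ≤ ∑ i, ∑ j, ‖b.repr (A (b j)) i‖ :=
        Finset.single_le_sum (f := fun i => ∑ j, ‖b.repr (A (b j)) i‖)
          (fun _ _ => by positivity) (Finset.mem_univ i)
      linarith
    set t : ℝ := min 1 (η / C) with ht
    have ht0 : 0 < t := by positivity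
    have ht1 : t ≤ 1 := min_le_left _ _
    have htC : t * C ≤ η := by
      have : t ≤ η / C := min_le_right _ _
      rwa [le_div_iff₀ (by linarith)] at this
    have htc : (t : ℂ) ≠ 0 := by exact_mod_cast ht0.ne'
    refine ⟨b.unitsSMul (fun j => (Units.mk0 (t : ℂ) htc) ^ (j : ℕ)), ?_⟩
    intro i j
    rw [Module.Basis.repr_unitsSMul]
    simp only [Module.Basis.unitsSMul_apply, Units.smul_def, Units.val_inv_eq_inv_val,
      Units.val_pow_eq_pow_val, Units.val_mk0, map_smul, Finsupp.smul_apply, smul_eq_mul]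
    rcases lt_trichotomy i j with h | h | h
    · rw [if_neg h.ne]
      have hij : (i : ℕ) < j := h
      obtain ⟨d, hd⟩ : ∃ d, (j : ℕ) = i + (d + 1) := ⟨j - i - 1, by omega⟩
      rw [hd, pow_add, sub_zero]
      have : ((t : ℂ) ^ (i : ℕ))⁻¹ * ((t : ℂ) ^ (i : ℕ) * (t : ℂ) ^ (d + 1) * b.repr (A (b j)) i)
          = (t : ℂ) ^ (d + 1) * b.repr (A (b j)) i := by
        field_simp
      rw [this, norm_mul, norm_pow, Complex.norm_real, Real.norm_of_nonneg ht0.le]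
      calc t ^ (d + 1) * ‖b.repr (A (b j)) i‖ ≤ t * C := by
            apply mul_le_mul _ (hCb i j) (norm_nonneg _) ht0.le
            exact pow_le_of_le_one ht0.le ht1 (by omega)
        _ ≤ η := htC
    · subst h
      rw [if_pos rfl, inv_mul_cancel_left₀ (pow_ne_zero _ htc), sub_self, norm_zero]
      exact hη.le
    · rw [if_neg h.ne', hb i j h]
      simpa using hη.le

/-- monomials -/
def mono {R : Type*} [CommMonoid R] {k : ℕ} (α : Fin k → ℕ) (z : Fin k → R) : R := ∏ i, z i ^ α i

theorem hasSum_geom_multi {𝕜 : Type*} [RCLike 𝕜] (k : ℕ) (x : Fin k → 𝕜) (hx : ∀ i, ‖x i‖ < 1) :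
    Summable (fun α : Fin k → ℕ => ‖mono α x‖) ∧
    HasSum (fun α : Fin k → ℕ => mono α x) (∏ i, (1 - x i)⁻¹) := by
  induction k with
  | zero =>
    refine ⟨(hasSum_fintype _).summable, ?_⟩
    simp [mono]
  | succ n ih =>
    obtain ⟨h1, h2⟩ := ih (fun i => x i.succ) (fun i => hx _)
    have g1 := summable_norm_geometric_of_norm_lt_one (hx 0)
    have g2 := hasSum_geometric_of_norm_lt_one (hx 0)
    have key : ∀ p : ℕ × (Fin n → ℕ), mono (Fin.consEquiv (fun _ : Fin (n + 1) => ℕ) p) x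
        = x 0 ^ p.1 * mono p.2 (fun i => x i.succ) := by
      intro p
      simp [mono, Fin.prod_univ_succ, Fin.consEquiv]
    constructor
    · rw [← (Fin.consEquiv (fun _ : Fin (n + 1) => ℕ)).summable_iff]
      have := g1.mul_of_nonneg h1 (fun _ => norm_nonneg _) (fun _ => norm_nonneg _)
      refine this.congr ?_
      intro p
      simp only [Function.comp, key, norm_mul]
    · rw [← (Fin.consEquiv (fun _ : Fin (n + 1) => ℕ)).hasSum_iff]
      have hs : Summable (fun p : ℕ × (Fin n → ℕ) => x 0 ^ p.1 * mono p.2 (fun i => x i.succ)) :=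
        summable_mul_of_summable_norm (f := fun m : ℕ => x 0 ^ m)
          (g := fun a : Fin n → ℕ => mono a (fun i => x i.succ)) g1 h1
      have h3 := HasSum.mul g2 h2 hs
      rw [Fin.prod_univ_succ]
      have e2 : ((fun α => mono α x) ∘ ⇑(Fin.consEquiv (fun _ : Fin (n + 1) => ℕ)))
          = (fun p : ℕ × (Fin n → ℕ) => x 0 ^ p.1 * mono p.2 (fun i => x i.succ)) := by
        funext p; exact key p
      rw [e2]
      exact h3

theorem torusMap_norm_le {n : ℕ} {r : ℝ} (hr : 0 ≤ r) (θ : Fin n → ℝ) :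
    ‖torusMap (0 : Fin n → ℂ) (fun _ => r) θ‖ ≤ r := by
  rw [pi_norm_le_iff_of_nonneg hr]
  intro i
  simp [torusMap, abs_of_nonneg hr]

theorem torusMap_coord_norm {n : ℕ} {r : ℝ} (hr : 0 ≤ r) (θ : Fin n → ℝ) (i : Fin n) :
    ‖torusMap (0 : Fin n → ℂ) (fun _ => r) θ i‖ = r := by
  simp [torusMap, abs_of_nonneg hr]

theorem continuous_torusMap {n : ℕ} (r : ℝ) :
    Continuous (torusMap (0 : Fin n → ℂ) (fun _ => r)) := by
  unfold torusMap
  fun_prop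

theorem torusIntegrable_of_cont {n : ℕ} {r : ℝ} {g : (Fin n → ℂ) → ℂ}
    (hg : Continuous (fun θ => g (torusMap (0 : Fin n → ℂ) (fun _ => r) θ))) :
    TorusIntegrable g 0 (fun _ => r) := by
  unfold TorusIntegrable
  exact hg.continuousOn.integrableOn_compact isCompact_Icc

theorem torus_cauchy (n : ℕ) {r s : ℝ} (hr : 0 < r) (hrs : r < s) :
    ∀ (g : (Fin n → ℂ) → ℂ) (_ : DifferentiableOn ℂ g (ball 0 s)) (z : Fin n → ℂ) (_ : ‖z‖ < r),
    (∯ ζ in T((0 : Fin n → ℂ), (fun _ => r)), (∏ i, (ζ i - z i)⁻¹) * g ζ)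
      = (2 * Real.pi * Complex.I) ^ n * g z := by
  induction n with
  | zero =>
    intro g hg z hz
    rw [torusIntegral_dim0]
    simp [Subsingleton.elim (0 : Fin 0 → ℂ) z]
  | succ n ih =>
    intro g hg z hz
    have hzi : ∀ i, ‖z i‖ < r := (pi_norm_lt_iff hr).mp hz
    have hcons : ∀ (x : ℂ) (y : Fin n → ℂ), ‖x‖ < s → ‖y‖ < s →
        (Fin.cons x y : Fin (n + 1) → ℂ) ∈ ball (0 : Fin (n + 1) → ℂ) s := by
      intro x y hx hy
      rw [mem_ball_zero_iff, pi_norm_lt_iff (by linarith)]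
      intro i
      refine Fin.cases ?_ ?_ i
      · simpa using hx
      · intro i; simpa using lt_of_le_of_lt (norm_le_pi_norm y i) hy
    rw [torusIntegral_succ]
    · have hinner : ∀ x ∈ sphere (0 : ℂ) r,
          (∯ y in T((0 : Fin n → ℂ), (fun _ => r)),
            (∏ i, ((Fin.cons x y : Fin (n + 1) → ℂ) i - z i)⁻¹) * g (Fin.cons x y))
          = (x - z 0)⁻¹ • ((2 * Real.pi * Complex.I) ^ n * g (Fin.cons x (fun i => z i.succ))) := by
        intro x hx
        have hxs : ‖x‖ < s := by rw [mem_sphere_zero_iff_norm.mp hx]; exact hrs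
        have h := ih (fun y => g (Fin.cons x y)) ?_ (fun i => z i.succ) ?_
        · rw [← h, smul_eq_mul, ← torusIntegral_const_mul]
          congr 1
          ext y
          rw [Fin.prod_univ_succ]
          simp [mul_assoc]
        · intro y hy
          have hd : DifferentiableAt ℂ g (Fin.cons x y) :=
            hg.differentiableAt (isOpen_ball.mem_nhds (hcons x y hxs (mem_ball_zero_iff.mp hy)))
          apply DifferentiableAt.differentiableWithinAt
          apply DifferentiableAt.comp y hd
          rw [differentiableAt_pi]
          intro i
          refine Fin.cases ?_ ?_ i
          · simp
          · intro i; simp only [Fin.cons_succ]; fun_prop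
        · rw [pi_norm_lt_iff hr]
          intro i; exact hzi _
      have := circleIntegral.integral_congr (f := fun x => (∯ y in T((0 : Fin n → ℂ), (fun _ => r)),
            (∏ i, ((Fin.cons x y : Fin (n + 1) → ℂ) i - z i)⁻¹) * g (Fin.cons x y))) hr.le hinner
      refine Eq.trans this ?_
      rw [DifferentiableOn.circleIntegral_sub_inv_smul]
      · rw [smul_eq_mul, pow_succ]
        have : (Fin.cons (z 0) (fun i : Fin n => z i.succ) : Fin (n + 1) → ℂ) = z := by
          ext i; refine Fin.cases ?_ ?_ i <;> simp
        rw [this]; ring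
      · intro x hx
        have hxs : ‖x‖ < s := lt_of_le_of_lt (mem_closedBall_zero_iff.mp hx) hrs
        have hd : DifferentiableAt ℂ g (Fin.cons x (fun i : Fin n => z i.succ)) := by
          refine hg.differentiableAt (isOpen_ball.mem_nhds (hcons x _ hxs ?_))
          rw [pi_norm_lt_iff (by linarith)]
          intro i; exact (hzi _).trans hrs
        apply DifferentiableAt.differentiableWithinAt
        apply DifferentiableAt.const_mul
        apply DifferentiableAt.comp x hd
        rw [differentiableAt_pi]
        intro i
        refine Fin.cases ?_ ?_ i
        · simp
        · intro i; simp
      · simpa using hzi 0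
    · apply torusIntegrable_of_cont
      apply Continuous.mul
      · refine continuous_finsetProd _ fun i _ => Continuous.inv₀ ?_ ?_
        · have := (continuous_torusMap (n := n + 1) r)
          fun_prop
        · intro θ h0
          have h1 := torusMap_coord_norm (n := n + 1) hr.le θ i
          rw [sub_eq_zero.mp h0] at h1
          have := hzi i
          linarith
      · rw [← continuousOn_univ]
        refine hg.continuousOn.comp (continuous_torusMap r).continuousOn ?_
        intro θ _
        exact mem_ball_zero_iff.mpr (lt_of_le_of_lt (torusMap_norm_le hr.le θ) hrs)

/-- Taylor coefficients through the Cauchy integral. -/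
def ccoef {k : ℕ} (r : ℝ) (g : (Fin k → ℂ) → ℂ) (α : Fin k → ℕ) : ℂ :=
  ((2 * Real.pi * Complex.I) ^ k)⁻¹ *
    ∯ ζ in T((0 : Fin k → ℂ), (fun _ => r)), (∏ i, (ζ i)⁻¹ ^ (α i + 1)) * g ζ

theorem cont_torus {k : ℕ} {r s : ℝ} (hr : 0 < r) (hrs : r < s) {g : (Fin k → ℂ) → ℂ}
    (hg : ContinuousOn g (ball 0 s)) :
    Continuous (fun θ => g (torusMap (0 : Fin k → ℂ) (fun _ => r) θ)) := by
  rw [← continuousOn_univ]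
  refine hg.comp (continuous_torusMap r).continuousOn ?_
  intro θ _
  exact mem_ball_zero_iff.mpr (lt_of_le_of_lt (torusMap_norm_le hr.le θ) hrs)

theorem cont_torus_ker {k : ℕ} {r s : ℝ} (hr : 0 < r) (hrs : r < s) {g : (Fin k → ℂ) → ℂ}
    (hg : ContinuousOn g (ball 0 s)) (α : Fin k → ℕ) :
    Continuous (fun θ => (∏ i, (torusMap (0 : Fin k → ℂ) (fun _ => r) θ i)⁻¹ ^ (α i + 1)) *
      g (torusMap (0 : Fin k → ℂ) (fun _ => r) θ)) := by
  apply Continuous.mul _ (cont_torus hr hrs hg)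
  refine continuous_finsetProd _ fun i _ => Continuous.pow (Continuous.inv₀ ?_ ?_) _
  · have := (continuous_torusMap (n := k) r)
    fun_prop
  · intro θ h0
    have h1 := torusMap_coord_norm (n := k) hr.le θ i
    rw [h0, norm_zero] at h1
    linarith

theorem ccoef_sub {k : ℕ} {r s : ℝ} (hr : 0 < r) (hrs : r < s) {g g' : (Fin k → ℂ) → ℂ}
    (hg : ContinuousOn g (ball 0 s)) (hg' : ContinuousOn g' (ball 0 s)) (α : Fin k → ℕ) :
    ccoef r (fun z => g z - g' z) α = ccoef r g α - ccoef r g' α := by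
  unfold ccoef
  rw [← mul_sub, ← torusIntegral_sub]
  · congr 2
    ext ζ
    simp [mul_sub]
  · exact torusIntegrable_of_cont (cont_torus_ker hr hrs hg α)
  · exact torusIntegrable_of_cont (cont_torus_ker hr hrs hg' α)

theorem ker_norm {k : ℕ} {r : ℝ} (hr : 0 < r) (α : Fin k → ℕ) (θ : Fin k → ℝ) :
    ‖∏ i, (torusMap (0 : Fin k → ℂ) (fun _ => r) θ i)⁻¹ ^ (α i + 1)‖
      = (r⁻¹) ^ k * mono α (fun _ => r⁻¹) := by
  simp only [norm_prod, norm_pow, norm_inv, torusMap_coord_norm hr.le]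
  simp only [mono, pow_succ, Finset.prod_mul_distrib]
  simp [mul_comm]

theorem ccoef_bound {k : ℕ} {r s M : ℝ} (hr : 0 < r) (hrs : r < s) {g : (Fin k → ℂ) → ℂ}
    (hM : ∀ z ∈ ball (0 : Fin k → ℂ) s, ‖g z‖ ≤ M) (α : Fin k → ℕ) :
    ‖ccoef r g α‖ ≤ M * mono α (fun _ => r⁻¹) := by
  unfold ccoef
  have h := norm_torusIntegral_le_of_norm_le_const (c := (0 : Fin k → ℂ)) (R := fun _ => r)
    (f := fun ζ => (∏ i, (ζ i)⁻¹ ^ (α i + 1)) * g ζ)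
    (C := (r⁻¹) ^ k * mono α (fun _ => r⁻¹) * M) ?_
  · rw [norm_mul, norm_inv]
    have h2 : ‖(2 * Real.pi * Complex.I : ℂ) ^ k‖ = (2 * Real.pi) ^ k := by
      rw [norm_pow]; simp [abs_of_pos Real.pi_pos]
    rw [h2]
    have hp : 0 < (2 * Real.pi) ^ k := by positivity
    rw [inv_mul_le_iff₀ hp]
    refine h.trans (le_of_eq ?_)
    simp only [Finset.prod_const, Finset.card_univ, Fintype.card_fin, abs_of_pos hr]
    have hk : r ^ k * r⁻¹ ^ k = 1 := by rw [← mul_pow, mul_inv_cancel₀ hr.ne', one_pow]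
    linear_combination ((2 * Real.pi) ^ k * mono α (fun _ : Fin k => r⁻¹) * M) * hk
  · intro θ
    rw [norm_mul, ker_norm hr]
    apply mul_le_mul_of_nonneg_left
    · exact hM _ (mem_ball_zero_iff.mpr (lt_of_le_of_lt (torusMap_norm_le hr.le θ) hrs))
    · have : 0 ≤ mono α (fun _ : Fin k => r⁻¹) := by unfold mono; positivity
      positivity

theorem ccoef_hasSum {k : ℕ} {r s M : ℝ} (hr : 0 < r) (hrs : r < s) {g : (Fin k → ℂ) → ℂ}
    (hg : DifferentiableOn ℂ g (ball 0 s))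
    (hM : ∀ z ∈ ball (0 : Fin k → ℂ) s, ‖g z‖ ≤ M) (z : Fin k → ℂ) (hz : ‖z‖ < r) :
    HasSum (fun α => ccoef r g α * mono α z) (g z) := by
  have hzi : ∀ i, ‖z i‖ < r := (pi_norm_lt_iff hr).mp hz
  have hM0 : 0 ≤ M := (norm_nonneg _).trans (hM 0 (mem_ball_self (by linarith)))
  have hc := torus_cauchy k hr hrs g hg z hz
  have hpi : ((2 * Real.pi * Complex.I : ℂ) ^ k) ≠ 0 := by
    apply pow_ne_zero
    simp [Real.pi_ne_zero]
  have hgm := hasSum_geom_multi (𝕜 := ℝ) k (fun i => ‖z i‖ / r) (fun i => by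
    rw [norm_div, norm_norm, Real.norm_of_nonneg hr.le, div_lt_one hr]; exact hzi i)
  have key : HasSum (fun α => ∯ ζ in T((0 : Fin k → ℂ), (fun _ => r)),
      (mono α z * ((∏ i, (ζ i)⁻¹ ^ (α i + 1)) * g ζ)))
      (∯ ζ in T((0 : Fin k → ℂ), (fun _ => r)), (∏ i, (ζ i - z i)⁻¹) * g ζ) := by
    unfold torusIntegral
    apply MeasureTheory.hasSum_integral_of_dominated_convergence
      (fun α _ => M * mono α (fun i => ‖z i‖ / r))
    · intro α
      apply Continuous.aestronglyMeasurable
      have c1 : Continuous (fun θ : Fin k → ℝ =>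
          ∏ i : Fin k, (r : ℂ) * Complex.exp (θ i * Complex.I) * Complex.I) := by fun_prop
      exact c1.smul (continuous_const.mul (cont_torus_ker hr hrs hg.continuousOn α))
    · intro α
      refine Eventually.of_forall fun θ => ?_
      rw [norm_smul, norm_mul, norm_mul, ker_norm hr]
      have e1 : ‖∏ i : Fin k, (r : ℂ) * Complex.exp (θ i * Complex.I) * Complex.I‖ = r ^ k := by
        simp [norm_prod, abs_of_pos hr]
      have e2 : mono α (fun i => ‖z i‖ / r) = ‖mono α z‖ * mono α (fun _ => r⁻¹) := by
        simp [mono, norm_prod, div_eq_mul_inv, mul_pow, Finset.prod_mul_distrib]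
      rw [e1, e2]
      have := hM _ (mem_ball_zero_iff.mpr (lt_of_le_of_lt (torusMap_norm_le hr.le θ) hrs))
      have hmn : 0 ≤ mono α (fun _ : Fin k => r⁻¹) := by unfold mono; positivity
      have e3 : r ^ k * (‖mono α z‖ * (r⁻¹ ^ k * mono α (fun _ => r⁻¹) *
          ‖g (torusMap 0 (fun _ => r) θ)‖)) =
          ‖g (torusMap 0 (fun _ => r) θ)‖ * (‖mono α z‖ * mono α (fun _ => r⁻¹)) := by
        have hk : r ^ k * r⁻¹ ^ k = 1 := by rw [← mul_pow, mul_inv_cancel₀ hr.ne', one_pow]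
        linear_combination (‖mono α z‖ * mono α (fun _ : Fin k => r⁻¹) *
          ‖g (torusMap 0 (fun _ => r) θ)‖) * hk
      rw [e3]
      exact mul_le_mul_of_nonneg_right this (by positivity)
    · exact Eventually.of_forall fun θ => hgm.2.summable.mul_left M
    · rw [← MeasureTheory.IntegrableOn]
      exact continuous_const.continuousOn.integrableOn_compact isCompact_Icc
    · refine Eventually.of_forall fun θ => ?_
      apply HasSum.const_smul
      set ζ := torusMap (0 : Fin k → ℂ) (fun _ => r) θ with hζ
      have hζi : ∀ i, ‖ζ i‖ = r := fun i => torusMap_coord_norm hr.le θ i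
      have hζ0 : ∀ i, ζ i ≠ 0 := by
        intro i h0
        have := hζi i
        rw [h0, norm_zero] at this
        linarith
      have h1 := (hasSum_geom_multi (𝕜 := ℂ) k (fun i => z i / ζ i) (fun i => by
        rw [norm_div, hζi, div_lt_one hr]; exact hzi i)).2
      have h2 := (h1.mul_left (∏ i, (ζ i)⁻¹)).mul_right (g ζ)
      have e1 : (∏ i, (ζ i)⁻¹) * ∏ i, (1 - z i / ζ i)⁻¹ = ∏ i, (ζ i - z i)⁻¹ := by
        rw [← Finset.prod_mul_distrib]
        apply Finset.prod_congr rfl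
        intro i _
        rw [← mul_inv]
        congr 1
        rw [mul_sub, mul_one, mul_div_cancel₀ _ (hζ0 i)]
      rw [e1] at h2
      refine h2.congr_fun ?_ |> id
      intro α
      simp only [mono, pow_succ, Finset.prod_mul_distrib, div_eq_mul_inv, mul_pow]
      ring
  have h3 := key.mul_left ((2 * Real.pi * Complex.I : ℂ) ^ k)⁻¹
  rw [hc, inv_mul_cancel_left₀ hpi] at h3
  have e : (fun α => ccoef r g α * mono α z) = fun α => ((2 * Real.pi * Complex.I : ℂ) ^ k)⁻¹ *
      ∯ ζ in T((0 : Fin k → ℂ), (fun _ => r)),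
      (mono α z * ((∏ i, (ζ i)⁻¹ ^ (α i + 1)) * g ζ)) := by
    funext α
    rw [torusIntegral_const_mul]
    unfold ccoef
    ring
  rw [e]
  exact h3

/-- index type of coefficients -/
abbrev Idx (k : ℕ) := (Fin k → ℕ) × Fin k

/-- absolutely summable coefficient families -/
abbrev Wsp (k : ℕ) := lp (fun _ : Idx k => ℂ) 1

theorem Wsp_summable {k : ℕ} (b : Wsp k) : Summable (fun p => ‖b p‖) := by
  have := (memℓp_gen_iff (p := 1) (by simp)).mp b.2
  simpa using this

theorem Wsp_norm {k : ℕ} (b : Wsp k) : ‖b‖ = ∑' p, ‖b p‖ := by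
  rw [lp.norm_eq_tsum_rpow (by simp)]
  simp

theorem memW_iff {k : ℕ} (c : Idx k → ℂ) : Memℓp (E := fun _ : Idx k => ℂ) c 1 ↔ Summable (fun p => ‖c p‖) := by
  rw [memℓp_gen_iff (p := 1) (by simp)]
  simp

open Classical in
/-- make an element of `Wsp` -/
def toW {k : ℕ} (c : Idx k → ℂ) : Wsp k :=
  if h : Memℓp (E := fun _ : Idx k => ℂ) c 1 then ⟨c, h⟩ else 0

theorem toW_apply {k : ℕ} {c : Idx k → ℂ} (h : Summable (fun p => ‖c p‖)) (p : Idx k) :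
    toW c p = c p := by
  unfold toW
  rw [dif_pos ((memW_iff c).mpr h)]

theorem toW_sub_norm_le {k : ℕ} {c c' : Idx k → ℂ} (h : Summable (fun p => ‖c p‖))
    (h' : Summable (fun p => ‖c' p‖)) {g : Idx k → ℝ} (hg : Summable g)
    (hcg : ∀ p, ‖c p - c' p‖ ≤ g p) : ‖toW c - toW c'‖ ≤ ∑' p, g p := by
  have hs := Wsp_summable (toW c - toW c')
  rw [Wsp_norm]
  refine hs.tsum_le_tsum ?_ hg
  intro p
  rw [lp.coeFn_sub, Pi.sub_apply, toW_apply h, toW_apply h']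
  exact hcg p

theorem toW_norm_le {k : ℕ} {c : Idx k → ℂ} {g : Idx k → ℝ} (hg : Summable g)
    (hcg : ∀ p, ‖c p‖ ≤ g p) : ‖toW c‖ ≤ ∑' p, g p := by
  have h : Summable (fun p => ‖c p‖) := Summable.of_nonneg_of_le (fun _ => norm_nonneg _) hcg hg
  rw [Wsp_norm]
  refine (Wsp_summable _).tsum_le_tsum ?_ hg
  intro p
  rw [toW_apply h]
  exact hcg p

/-- total degree -/
def deg {k : ℕ} (α : Fin k → ℕ) : ℕ := ∑ i, α i

theorem mono_norm_le {k : ℕ} (α : Fin k → ℕ) {z : Fin k → ℂ} {R : ℝ} (hz : ‖z‖ ≤ R) :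
    ‖mono α z‖ ≤ R ^ deg α := by
  unfold mono deg
  rw [norm_prod, ← Finset.prod_pow_eq_pow_sum]
  apply Finset.prod_le_prod
  · intros; positivity
  · intro i _
    rw [norm_pow]
    exact pow_le_pow_left₀ (norm_nonneg _) ((norm_le_pi_norm z i).trans hz) _

theorem mono_differentiable {k : ℕ} (α : Fin k → ℕ) :
    Differentiable ℂ (fun z : Fin k → ℂ => mono α z) := by
  unfold mono
  fun_prop

/-- evaluation of the part of the power series with indices in `T` -/
def ev {k : ℕ} (T : Set (Idx k)) (b : Wsp k) (z : Fin k → ℂ) : Fin k → ℂ :=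
  fun j => ∑' α, T.indicator (fun p => b p) (α, j) * mono α z

section evfacts
variable {k : ℕ} {T : Set (Idx k)} {R M : ℝ}

theorem ev_term_le (hT : ∀ p ∈ T, R ^ deg p.1 ≤ M) (hM : 0 ≤ M) (b : Wsp k) {z : Fin k → ℂ} (hz : ‖z‖ ≤ R)
    (j : Fin k) (α : Fin k → ℕ) :
    ‖T.indicator (fun p => b p) (α, j) * mono α z‖ ≤ M * ‖b (α, j)‖ := by
  by_cases h : (α, j) ∈ T
  · rw [Set.indicator_of_mem h, norm_mul, mul_comm]
    exact mul_le_mul_of_nonneg_right ((mono_norm_le α hz).trans (hT _ h)) (norm_nonneg _)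
  · rw [Set.indicator_of_notMem h, zero_mul, norm_zero]
    positivity

theorem slice_summable (b : Wsp k) (j : Fin k) : Summable (fun α => ‖b (α, j)‖) :=
  (Wsp_summable b).comp_injective (i := fun α => (α, j)) (fun _ _ h => (Prod.mk.inj h).1)

theorem slice_le (b : Wsp k) (j : Fin k) : ∑' α, ‖b (α, j)‖ ≤ ‖b‖ := by
  rw [Wsp_norm]
  exact tsum_comp_le_tsum_of_inj (Wsp_summable b) (fun _ => norm_nonneg _)
    (i := fun α => (α, j)) (fun _ _ h => (Prod.mk.inj h).1)

theorem ev_summable (hT : ∀ p ∈ T, R ^ deg p.1 ≤ M) (hM : 0 ≤ M) (b : Wsp k) {z : Fin k → ℂ}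
    (hz : ‖z‖ ≤ R) (j : Fin k) :
    Summable (fun α => T.indicator (fun p => b p) (α, j) * mono α z) :=
  Summable.of_norm_bounded ((slice_summable b j).mul_left M) (ev_term_le hT hM b hz j)

theorem ev_norm_le (hT : ∀ p ∈ T, R ^ deg p.1 ≤ M) (hM : 0 ≤ M) (b : Wsp k) {z : Fin k → ℂ}
    (hz : ‖z‖ ≤ R) : ‖ev T b z‖ ≤ M * ‖b‖ := by
  rw [pi_norm_le_iff_of_nonneg (by positivity)]
  intro j
  have := tsum_of_norm_bounded ((slice_summable b j).mul_left M).hasSum (ev_term_le hT hM b hz j)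
  refine this.trans ?_
  rw [tsum_mul_left]
  exact mul_le_mul_of_nonneg_left (slice_le b j) hM

theorem ev_sub (hT : ∀ p ∈ T, R ^ deg p.1 ≤ M) (hM : 0 ≤ M) (b b' : Wsp k) {z : Fin k → ℂ}
    (hz : ‖z‖ ≤ R) : ev T (b - b') z = ev T b z - ev T b' z := by
  funext j
  unfold ev
  rw [Pi.sub_apply, ← (ev_summable hT hM b hz j).tsum_sub (ev_summable hT hM b' hz j)]
  congr 1
  funext α
  by_cases h : (α, j) ∈ T
  · simp only [Set.indicator_of_mem h, lp.coeFn_sub, Pi.sub_apply]; ring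
  · simp only [Set.indicator_of_notMem h]; ring

/-- Lipschitz bound for bounded holomorphic maps. -/
theorem fderiv_bound {E F : Type*} [NormedAddCommGroup E] [NormedSpace ℂ E] [NormedAddCommGroup F]
    [NormedSpace ℂ F] {g : E → F} {R R' C : ℝ} (hR : R' < R)
    (hd : DifferentiableOn ℂ g (ball 0 R)) (hC : ∀ z ∈ ball (0 : E) R, ‖g z‖ ≤ C) {x : E}
    (hx : ‖x‖ ≤ R') : ‖fderiv ℂ g x‖ ≤ 2 * C / (R - R') := by
  have hsub : ball x (R - R') ⊆ ball (0 : E) R := by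
    intro y hy
    rw [mem_ball_zero_iff]
    rw [mem_ball, dist_eq_norm] at hy
    calc ‖y‖ = ‖(y - x) + x‖ := by simp
      _ ≤ ‖y - x‖ + ‖x‖ := norm_add_le _ _
      _ < R := by linarith
  refine Complex.norm_fderiv_le_div_of_mapsTo_ball (hd.mono hsub) ?_ (by linarith)
  intro y hy
  rw [mem_closedBall, dist_eq_norm]
  have h1 := hC y (hsub hy)
  have h2 := hC x (hsub (mem_ball_self (by linarith)))
  linarith [norm_sub_le (g y) (g x)]

theorem lip_bound {E F : Type*} [NormedAddCommGroup E] [NormedSpace ℂ E] [NormedAddCommGroup F]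
    [NormedSpace ℂ F] {g : E → F} {R R' C : ℝ} (hR : R' < R)
    (hd : DifferentiableOn ℂ g (ball 0 R)) (hC : ∀ z ∈ ball (0 : E) R, ‖g z‖ ≤ C) {x y : E}
    (hx : ‖x‖ ≤ R') (hy : ‖y‖ ≤ R') : ‖g x - g y‖ ≤ 2 * C / (R - R') * ‖x - y‖ := by
  refine Convex.norm_image_sub_le_of_norm_fderiv_le (𝕜 := ℂ) (s := closedBall (0 : E) R') ?_ ?_
    (convex_closedBall _ _) (mem_closedBall_zero_iff.mpr hy) (mem_closedBall_zero_iff.mpr hx)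
  · intro z hz
    refine hd.differentiableAt (isOpen_ball.mem_nhds ?_)
    rw [mem_closedBall_zero_iff] at hz
    rw [mem_ball_zero_iff]; linarith
  · intro z hz
    exact fderiv_bound hR hd hC (mem_closedBall_zero_iff.mp hz)

theorem ev_differentiableOn (hT : ∀ p ∈ T, R ^ deg p.1 ≤ M) (hM : 0 ≤ M) (b : Wsp k) :
    DifferentiableOn ℂ (ev T b) (ball 0 R) := by
  intro x hx
  rw [mem_ball_zero_iff] at hx
  obtain ⟨R', hxR', hR'⟩ := exists_between hx
  apply DifferentiableAt.differentiableWithinAt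
  rw [differentiableAt_pi]
  intro j
  have hterm : ∀ α, Differentiable ℂ
      (fun z => T.indicator (fun p => b p) (α, j) * mono α z) :=
    fun α => (mono_differentiable α).const_mul _
  have hd := hasFDerivAt_tsum_of_isPreconnected (𝕜 := ℂ) (s := ball (0 : Fin k → ℂ) R')
    (u := fun α => 2 * (M * ‖b (α, j)‖) / (R - R'))
    (f := fun α z => T.indicator (fun p => b p) (α, j) * mono α z)
    (f' := fun α z => fderiv ℂ (fun z => T.indicator (fun p => b p) (α, j) * mono α z) z)
    (x₀ := x) (x := x)
    ((((slice_summable b j).mul_left M).mul_left 2).div_const _) isOpen_ball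
    (convex_ball _ _).isPreconnected
    (fun α z _ => (hterm α z).hasFDerivAt)
    (fun α z hz => fderiv_bound hR' (hterm α).differentiableOn
      (fun w hw => ev_term_le hT hM b (mem_ball_zero_iff.mp hw).le j α)
      (mem_ball_zero_iff.mp hz).le)
    (mem_ball_zero_iff.mpr hxR') (ev_summable hT hM b hx.le j) (mem_ball_zero_iff.mpr hxR')
  exact hd.differentiableAt

theorem ev_lip (hT : ∀ p ∈ T, R ^ deg p.1 ≤ M) (hM : 0 ≤ M) (b : Wsp k) {R' : ℝ} (hR : R' < R)
    {x y : Fin k → ℂ} (hx : ‖x‖ ≤ R') (hy : ‖y‖ ≤ R') :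
    ‖ev T b x - ev T b y‖ ≤ 2 * M / (R - R') * ‖b‖ * ‖x - y‖ := by
  have := lip_bound hR (ev_differentiableOn hT hM b)
    (fun z hz => ev_norm_le hT hM b (mem_ball_zero_iff.mp hz).le) hx hy
  refine this.trans (le_of_eq ?_)
  ring

end evfacts

/-- abstract fixed point lemma for sequences -/
theorem seq_fixed_point {W : Type*} [NormedAddCommGroup W] [CompleteSpace W] (δ q : ℝ)
    (hδ : 0 ≤ δ) (hq0 : 0 ≤ q) (hq : q < 1) (Step : ℕ → W → W → W)
    (hself : ∀ n b0 b1, ‖b0‖ ≤ δ → ‖b1‖ ≤ δ → ‖Step n b0 b1‖ ≤ δ)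
    (hlip : ∀ n b0 b1 b0' b1' d, ‖b0‖ ≤ δ → ‖b1‖ ≤ δ → ‖b0'‖ ≤ δ → ‖b1'‖ ≤ δ →
      ‖b0 - b0'‖ ≤ d → ‖b1 - b1'‖ ≤ d → ‖Step n b0 b1 - Step n b0' b1'‖ ≤ q * d) :
    ∃ b : ℕ → W, (∀ n, ‖b n‖ ≤ δ) ∧ ∀ n, b n = Step n (b n) (b (n + 1)) := by
  classical
  let P : (BoundedContinuousFunction ℕ W) → ℕ → W := fun b n =>
    if ‖Step n (b n) (b (n + 1))‖ ≤ δ then Step n (b n) (b (n + 1)) else 0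
  have hP : ∀ b n, ‖P b n‖ ≤ δ := by
    intro b n
    simp only [P]
    split_ifs with h
    · exact h
    · simpa using hδ
  let Q : BoundedContinuousFunction ℕ W → BoundedContinuousFunction ℕ W := fun b =>
    BoundedContinuousFunction.ofNormedAddCommGroupDiscrete (P b) δ (hP b)
  have hQ : ∀ b n, Q b n = P b n := fun b n => rfl
  let s : Set (BoundedContinuousFunction ℕ W) := closedBall 0 δ
  have hmaps : Set.MapsTo Q s s := by
    intro b _
    rw [mem_closedBall_zero_iff, BoundedContinuousFunction.norm_le hδ]
    exact hP b
  have hsn : ∀ b ∈ s, ∀ n, ‖b n‖ ≤ δ := by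
    intro b hb n
    exact (b.norm_coe_le_norm n).trans (mem_closedBall_zero_iff.mp hb)
  have hPs : ∀ b ∈ s, ∀ n, P b n = Step n (b n) (b (n + 1)) := by
    intro b hb n
    simp only [P]
    rw [if_pos (hself _ _ _ (hsn b hb _) (hsn b hb _))]
  have hcontr : ContractingWith ⟨q, hq0⟩ (Set.MapsTo.restrict Q s s hmaps) := by
    refine ⟨by exact_mod_cast hq, ?_⟩
    apply LipschitzWith.of_dist_le_mul
    rintro ⟨b, hb⟩ ⟨b', hb'⟩
    rw [Subtype.dist_eq, Subtype.dist_eq]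
    simp only [Set.MapsTo.val_restrict_apply]
    rw [BoundedContinuousFunction.dist_le (by positivity)]
    intro n
    rw [hQ, hQ, hPs b hb, hPs b' hb', dist_eq_norm]
    apply hlip _ _ _ _ _ _ (hsn b hb _) (hsn b hb _) (hsn b' hb' _) (hsn b' hb' _)
    · rw [← dist_eq_norm]; exact BoundedContinuousFunction.dist_coe_le_dist n
    · rw [← dist_eq_norm]; exact BoundedContinuousFunction.dist_coe_le_dist (n + 1)
  obtain ⟨b, hb, hfix, -⟩ := hcontr.exists_fixedPoint' isClosed_closedBall.isComplete hmaps
    (x := 0) (mem_closedBall_self hδ) (edist_ne_top _ _)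
  refine ⟨b, hsn b hb, fun n => ?_⟩
  have this : Q b n = b n := congrArg (fun c : BoundedContinuousFunction ℕ W => c n) hfix
  rw [hQ, hPs b hb] at this
  exact this.symm

/-- subresonant indices -/
def Sres {k : ℕ} (lam : Fin k → ℂ) : Set (Idx k) := {p | ‖lam p.2‖ ≤ ‖mono p.1 lam‖}

theorem finite_deg_le (k m : ℕ) : {α : Fin k → ℕ | deg α ≤ m}.Finite := by
  refine (Set.finite_Iic (fun _ : Fin k => m)).subset ?_
  intro α hα i
  exact (Finset.single_le_sum (f := α) (fun _ _ => Nat.zero_le _) (Finset.mem_univ i)).trans hα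

theorem exists_deg_bound {k : ℕ} (lam : Fin k → ℂ) (h0 : ∀ j, lam j ≠ 0) (h1 : ‖lam‖ < 1)
    (c : ℝ) (hc : 0 < c) :
    ∃ m : ℕ, ∀ p : Idx k, m < deg p.1 → ‖mono p.1 lam‖ ≤ c * ‖lam p.2‖ := by
  have h2 : Tendsto (fun n => ‖lam‖ ^ n) atTop (𝓝 0) :=
    tendsto_pow_atTop_nhds_zero_of_lt_one (norm_nonneg _) h1
  have h3 : ∀ᶠ n in atTop, ∀ j, ‖lam‖ ^ n ≤ c * ‖lam j‖ := by
    rw [eventually_all]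
    intro j
    exact h2.eventually_le_const (mul_pos hc (norm_pos_iff.mpr (h0 j)))
  obtain ⟨m, hm⟩ := eventually_atTop.mp h3
  exact ⟨m, fun p hp => (mono_norm_le p.1 le_rfl).trans (hm _ hp.le p.2)⟩

theorem exists_m {k : ℕ} (lam : Fin k → ℂ) (h0 : ∀ j, lam j ≠ 0) (h1 : ‖lam‖ < 1) :
    ∃ m : ℕ, ∀ p ∈ Sres lam, deg p.1 ≤ m := by
  obtain ⟨m, hm⟩ := exists_deg_bound lam h0 h1 (1 / 2) (by norm_num)
  refine ⟨m, fun p hp => ?_⟩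
  by_contra h
  have h2 := hm p (by omega)
  have h3 : ‖lam p.2‖ ≤ ‖mono p.1 lam‖ := hp
  have := norm_pos_iff.mpr (h0 p.2)
  linarith

theorem exists_theta {k : ℕ} (lam : Fin k → ℂ) (h0 : ∀ j, lam j ≠ 0) (h1 : ‖lam‖ < 1) :
    ∃ θ : ℝ, 0 ≤ θ ∧ θ < 1 ∧ ∀ p ∉ Sres lam, ‖mono p.1 lam‖ ≤ θ * ‖lam p.2‖ := by
  obtain ⟨m, hm⟩ := exists_deg_bound lam h0 h1 (1 / 2) (by norm_num)
  have hfin : ({p : Idx k | deg p.1 ≤ m ∧ p ∉ Sres lam}).Finite := by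
    refine ((finite_deg_le k m).prod (Set.finite_univ (α := Fin k))).subset ?_
    rintro p ⟨hp, -⟩
    exact ⟨hp, trivial⟩
  have : ∀ s : Finset (Idx k), (∀ p ∈ s, p ∉ Sres lam) →
      ∃ θ : ℝ, 1 / 2 ≤ θ ∧ θ < 1 ∧ ∀ p ∈ s, ‖mono p.1 lam‖ ≤ θ * ‖lam p.2‖ := by
    intro s
    induction s using Finset.induction_on with
    | empty => intro _; exact ⟨1 / 2, le_rfl, by norm_num, by simp⟩
    | insert a s _ ih =>
      intro hs
      obtain ⟨θ, ht0, ht1, ht⟩ := ih (fun p hp => hs p (Finset.mem_insert_of_mem hp))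
      have ha : ‖mono a.1 lam‖ < ‖lam a.2‖ := not_le.mp (hs a (Finset.mem_insert_self _ _))
      have hpos := norm_pos_iff.mpr (h0 a.2)
      refine ⟨max θ (‖mono a.1 lam‖ / ‖lam a.2‖), le_max_of_le_left ht0,
        max_lt ht1 ((div_lt_one hpos).mpr ha), ?_⟩
      intro p hp
      rcases Finset.mem_insert.mp hp with rfl | hp
      · rw [← div_le_iff₀ hpos]; exact le_max_right _ _
      · exact (ht p hp).trans (mul_le_mul_of_nonneg_right (le_max_left _ _) (norm_nonneg _))
  obtain ⟨θ, ht0, ht1, ht⟩ := this hfin.toFinset (fun p hp => ((hfin.mem_toFinset).mp hp).2)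
  refine ⟨θ, by linarith, ht1, fun p hp => ?_⟩
  by_cases hd : deg p.1 ≤ m
  · exact ht p ((hfin.mem_toFinset).mpr ⟨hd, hp⟩)
  · exact (hm p (by omega)).trans (mul_le_mul_of_nonneg_right ht0 (norm_nonneg _))

theorem idx_summable {k : ℕ} {q : ℝ} (h0 : 0 ≤ q) (h1 : q < 1) :
    Summable (fun p : Idx k => mono p.1 (fun _ : Fin k => q)) := by
  have h := (hasSum_geom_multi (𝕜 := ℝ) k (fun _ => q) (fun _ => by
    rwa [Real.norm_of_nonneg h0])).2.summable
  have h2 : Summable (fun _ : Fin k => (1 : ℝ)) := (hasSum_fintype _).summable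
  have := h.mul_of_nonneg h2 (fun α => by simp only [mono, Pi.zero_apply]; positivity)
    (fun _ => zero_le_one)
  simpa using this

/-- the remainder map -/
def Ghat {k : ℕ} (lam : Fin k → ℂ) (f : (Fin k → ℂ) → (Fin k → ℂ)) (b0 b1 : Wsp k)
    (z : Fin k → ℂ) : Fin k → ℂ :=
  lam⁻¹ * (f z - lam * z) + lam⁻¹ * (ev (Sres lam)ᶜ b1 (f z) - ev (Sres lam)ᶜ b1 (lam * z))
    + (ev (Sres lam) b0 (f z + ev (Sres lam)ᶜ b1 (f z)) - ev (Sres lam) b0 (lam * z))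

section
variable {k : ℕ} {lam : Fin k → ℂ} {f : (Fin k → ℂ) → (Fin k → ℂ)} {s κ η δ Λ : ℝ} {m : ℕ}

theorem hTu (lam : Fin k → ℂ) : ∀ p ∈ (Sres lam)ᶜ, (1 : ℝ) ^ deg p.1 ≤ 1 := by simp

theorem hTv (hm : ∀ p ∈ Sres lam, deg p.1 ≤ m) {R : ℝ} (hR : 1 ≤ R) :
    ∀ p ∈ (Sres lam), R ^ deg p.1 ≤ R ^ m :=
  fun p hp => pow_le_pow_right₀ hR (hm p hp)

theorem lam_mul_le (hs : ‖lam‖ * s ≤ κ) {z : Fin k → ℂ} (hz : z ∈ ball (0 : Fin k → ℂ) s) :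
    ‖lam * z‖ ≤ κ := by
  refine (norm_mul_le _ _).trans (le_trans ?_ hs)
  exact mul_le_mul_of_nonneg_left (mem_ball_zero_iff.mp hz).le (norm_nonneg _)

theorem Ghat_lip (hm : ∀ p ∈ Sres lam, deg p.1 ≤ m) (hκ1 : κ < 1)
    (hΛ : ‖lam⁻¹‖ ≤ Λ) (hδ1 : δ ≤ 1) (hη : 0 ≤ η) (hδ : 0 ≤ δ)
    {b0 b1 b0' b1' : Wsp k} {d : ℝ} (h1 : ‖b1‖ ≤ δ) (h0' : ‖b0'‖ ≤ δ)
    (h1' : ‖b1'‖ ≤ δ) (hd0 : ‖b0 - b0'‖ ≤ d) (hd1 : ‖b1 - b1'‖ ≤ d)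
    {z : Fin k → ℂ} (hlz : ‖lam * z‖ ≤ κ) (hfz : ‖f z‖ ≤ κ) (hfl : ‖f z - lam * z‖ ≤ η) :
    ‖Ghat lam f b0 b1 z - Ghat lam f b0' b1' z‖ ≤
      (Λ * (2 / (1 - κ)) + 4 * 3 ^ m) * (η + δ) * d := by
  have hd : 0 ≤ d := (norm_nonneg _).trans hd0
  have hΛ0 : 0 ≤ Λ := (norm_nonneg _).trans hΛ
  have h3 : (0 : ℝ) ≤ 3 ^ m := by positivity
  have hTv3 := hTv hm (R := 3) (by norm_num)
  set u := ev (Sres lam)ᶜ b1 with hu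
  set u' := ev (Sres lam)ᶜ b1' with hu'
  set v := ev (Sres lam) b0 with hv
  set v' := ev (Sres lam) b0' with hv'
  have nu : ‖u (f z)‖ ≤ δ := by
    have := ev_norm_le (hTu lam) zero_le_one b1 (hfz.trans hκ1.le)
    linarith
  have nu' : ‖u' (f z)‖ ≤ δ := by
    have := ev_norm_le (hTu lam) zero_le_one b1' (hfz.trans hκ1.le)
    linarith
  have du : ∀ w, ‖w‖ ≤ 1 → ev (Sres lam)ᶜ (b1 - b1') w = u w - u' w :=
    fun w hw => ev_sub (hTu lam) zero_le_one b1 b1' hw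
  have dv : ∀ w, ‖w‖ ≤ 3 → ev (Sres lam) (b0 - b0') w = v w - v' w :=
    fun w hw => ev_sub hTv3 h3 b0 b0' hw
  have n1 : ‖f z + u (f z)‖ ≤ 2 := (norm_add_le _ _).trans (by linarith)
  have n2 : ‖f z + u' (f z)‖ ≤ 2 := (norm_add_le _ _).trans (by linarith)
  have A1 : ‖(u (f z) - u' (f z)) - (u (lam * z) - u' (lam * z))‖ ≤ 2 / (1 - κ) * d * η := by
    rw [← du _ (by linarith), ← du _ (by linarith)]
    refine (ev_lip (hTu lam) zero_le_one (b1 - b1') hκ1 hfz hlz).trans ?_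
    rw [mul_one]
    have : 0 < 1 - κ := by linarith
    gcongr
  have A2 : ‖(v (f z + u (f z)) - v' (f z + u (f z))) - (v (lam * z) - v' (lam * z))‖
      ≤ 2 * 3 ^ m * d * (η + δ) := by
    rw [← dv _ (by linarith), ← dv _ (by linarith)]
    refine (ev_lip hTv3 h3 (b0 - b0') (R' := 2) (by norm_num) n1 (by linarith)).trans ?_
    have e : ‖f z + u (f z) - lam * z‖ ≤ η + δ := by
      calc ‖f z + u (f z) - lam * z‖ = ‖(f z - lam * z) + u (f z)‖ := by congr 1; ring
        _ ≤ _ := (norm_add_le _ _).trans (by linarith)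
    have e2 : (2 : ℝ) * 3 ^ m / (3 - 2) = 2 * 3 ^ m := by norm_num
    rw [e2]
    gcongr
  have A3 : ‖v' (f z + u (f z)) - v' (f z + u' (f z))‖ ≤ 2 * 3 ^ m * δ * d := by
    refine (ev_lip hTv3 h3 b0' (R' := 2) (by norm_num) n1 n2).trans ?_
    have e : ‖f z + u (f z) - (f z + u' (f z))‖ ≤ d := by
      have : f z + u (f z) - (f z + u' (f z)) = ev (Sres lam)ᶜ (b1 - b1') (f z) := by
        rw [du _ (by linarith)]; ring
      rw [this]
      have := ev_norm_le (hTu lam) zero_le_one (b1 - b1') (hfz.trans hκ1.le)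
      linarith
    have e2 : (2 : ℝ) * 3 ^ m / (3 - 2) = 2 * 3 ^ m := by norm_num
    rw [e2]
    gcongr
  have key : Ghat lam f b0 b1 z - Ghat lam f b0' b1' z =
      lam⁻¹ * ((u (f z) - u' (f z)) - (u (lam * z) - u' (lam * z)))
      + ((v (f z + u (f z)) - v' (f z + u (f z))) - (v (lam * z) - v' (lam * z)))
      + (v' (f z + u (f z)) - v' (f z + u' (f z))) := by
    unfold Ghat
    ring
  rw [key]
  refine (norm_add_le _ _).trans ?_
  have B1 : ‖lam⁻¹ * ((u (f z) - u' (f z)) - (u (lam * z) - u' (lam * z)))‖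
      ≤ Λ * (2 / (1 - κ) * d * η) :=
    (norm_mul_le _ _).trans (mul_le_mul hΛ A1 (norm_nonneg _) hΛ0)
  have B2 := norm_add_le (lam⁻¹ * ((u (f z) - u' (f z)) - (u (lam * z) - u' (lam * z))))
    ((v (f z + u (f z)) - v' (f z + u (f z))) - (v (lam * z) - v' (lam * z)))
  have C1 : 0 ≤ Λ * (2 / (1 - κ)) * δ * d := by
    have : 0 < 1 - κ := by linarith
    positivity
  have C2 : 0 ≤ (3 : ℝ) ^ m * η * d := by positivity
  nlinarith

theorem ev_zero (T : Set (Idx k)) (z : Fin k → ℂ) : ev T 0 z = 0 := by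
  funext j
  unfold ev
  have : ∀ α, T.indicator (fun p => (0 : Wsp k) p) (α, j) * mono α z = 0 := by
    intro α
    by_cases h : (α, j) ∈ T <;> simp [h]
  simp [this]

theorem Ghat_zero (z : Fin k → ℂ) : Ghat lam f 0 0 z = lam⁻¹ * (f z - lam * z) := by
  unfold Ghat
  simp [ev_zero]

theorem Ghat_norm (hm : ∀ p ∈ Sres lam, deg p.1 ≤ m) (hκ1 : κ < 1)
    (hΛ : ‖lam⁻¹‖ ≤ Λ) (hδ1 : δ ≤ 1) (hη : 0 ≤ η) (hδ : 0 ≤ δ)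
    {b0 b1 : Wsp k} (h0 : ‖b0‖ ≤ δ) (h1 : ‖b1‖ ≤ δ)
    {z : Fin k → ℂ} (hlz : ‖lam * z‖ ≤ κ) (hfz : ‖f z‖ ≤ κ) (hfl : ‖f z - lam * z‖ ≤ η) :
    ‖Ghat lam f b0 b1 z‖ ≤ (Λ * (2 / (1 - κ)) + 4 * 3 ^ m) * (η + δ) * δ + Λ * η := by
  have hl := Ghat_lip (f := f) hm hκ1 hΛ hδ1 hη hδ (b0 := b0) (b1 := b1) (b0' := 0) (b1' := 0)
    (d := δ) h1 (by simpa using hδ) (by simpa using hδ) (by simpa using h0) (by simpa using h1)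
    hlz hfz hfl
  have h2 : ‖Ghat lam f 0 0 z‖ ≤ Λ * η := by
    rw [Ghat_zero]
    exact (norm_mul_le _ _).trans (mul_le_mul hΛ hfl (norm_nonneg _) ((norm_nonneg _).trans hΛ))
  calc ‖Ghat lam f b0 b1 z‖ = ‖(Ghat lam f b0 b1 z - Ghat lam f 0 0 z) + Ghat lam f 0 0 z‖ := by
        congr 1; ring
    _ ≤ _ := (norm_add_le _ _).trans (by linarith)

theorem Ghat_diff (hm : ∀ p ∈ Sres lam, deg p.1 ≤ m) (hκ1 : κ < 1) (hδ1 : δ ≤ 1)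
    (hf : Differentiable ℂ f)
    {b0 b1 : Wsp k} (h1 : ‖b1‖ ≤ δ)
    (hlz : ∀ z ∈ ball (0 : Fin k → ℂ) s, ‖lam * z‖ ≤ κ)
    (hfz : ∀ z ∈ ball (0 : Fin k → ℂ) s, ‖f z‖ ≤ κ) :
    DifferentiableOn ℂ (Ghat lam f b0 b1) (ball 0 s) := by
  have hTv3 := hTv hm (R := 3) (by norm_num)
  intro z hz
  apply DifferentiableAt.differentiableWithinAt
  have hu : ∀ w, ‖w‖ ≤ κ → DifferentiableAt ℂ (ev (Sres lam)ᶜ b1) w := fun w hw =>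
    (ev_differentiableOn (hTu lam) zero_le_one b1).differentiableAt
      (isOpen_ball.mem_nhds (mem_ball_zero_iff.mpr (by linarith)))
  have hv : ∀ w, ‖w‖ ≤ 2 → DifferentiableAt ℂ (ev (Sres lam) b0) w := fun w hw =>
    (ev_differentiableOn hTv3 (by positivity) b0).differentiableAt
      (isOpen_ball.mem_nhds (mem_ball_zero_iff.mpr (by linarith)))
  have nu : ‖ev (Sres lam)ᶜ b1 (f z)‖ ≤ δ := by
    have := ev_norm_le (hTu lam) zero_le_one b1 ((hfz z hz).trans hκ1.le)
    linarith
  have d1 : DifferentiableAt ℂ (fun z : Fin k → ℂ => lam * z) z := by fun_prop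
  have d2 : DifferentiableAt ℂ (fun z => ev (Sres lam)ᶜ b1 (f z)) z :=
    DifferentiableAt.comp z (hu _ (hfz z hz)) (hf z)
  have d3 : DifferentiableAt ℂ (fun z => ev (Sres lam)ᶜ b1 (lam * z)) z :=
    DifferentiableAt.comp (g := ev (Sres lam)ᶜ b1) z (hu _ (hlz z hz)) d1
  have d4 : DifferentiableAt ℂ (fun z => ev (Sres lam) b0 (f z + ev (Sres lam)ᶜ b1 (f z))) z := by
    refine DifferentiableAt.comp (g := ev (Sres lam) b0)
      (f := fun z => f z + ev (Sres lam)ᶜ b1 (f z)) z (hv _ ?_) ((hf z).add d2)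
    have := hfz z hz
    exact (norm_add_le _ _).trans (by linarith)
  have d5 : DifferentiableAt ℂ (fun z => ev (Sres lam) b0 (lam * z)) z :=
    DifferentiableAt.comp (g := ev (Sres lam) b0) z (hv _ (by linarith [hlz z hz])) d1
  unfold Ghat
  exact ((((hf z).sub d1).const_mul _).add ((d2.sub d3).const_mul _)).add (d4.sub d5)
end

open Classical in
/-- coefficients of the step map -/
def stepc {k : ℕ} (lam : Fin k → ℂ) (r : ℝ) (f : (Fin k → ℂ) → (Fin k → ℂ)) (b0 b1 : Wsp k)
    (p : Idx k) : ℂ :=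
  if p ∈ Sres lam then -(mono p.1 lam)⁻¹ * ccoef r (fun z => Ghat lam f b0 b1 z p.2) p.1
  else mono p.1 lam / lam p.2 * b1 p + ccoef r (fun z => Ghat lam f b0 b1 z p.2) p.1

section
variable {k : ℕ} {lam : Fin k → ℂ} {f : (Fin k → ℂ) → (Fin k → ℂ)} {s κ η δ Λ r θ : ℝ} {m : ℕ}

theorem mono_inv_le (h0 : ∀ j, lam j ≠ 0) (hΛ : ‖lam⁻¹‖ ≤ Λ) {p : Idx k} (hp : p ∈ Sres lam) :
    ‖(mono p.1 lam)⁻¹‖ ≤ Λ := by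
  have h1 : ‖lam p.2‖⁻¹ ≤ Λ := by
    have := norm_le_pi_norm lam⁻¹ p.2
    rw [Pi.inv_apply, norm_inv] at this
    exact this.trans hΛ
  rw [norm_inv]
  exact (inv_anti₀ (norm_pos_iff.mpr (h0 p.2)) hp).trans h1

theorem ratio_le (h0 : ∀ j, lam j ≠ 0) (hθ : ∀ p ∉ Sres lam, ‖mono p.1 lam‖ ≤ θ * ‖lam p.2‖)
    {p : Idx k} (hp : p ∉ Sres lam) : ‖mono p.1 lam / lam p.2‖ ≤ θ := by
  rw [norm_div, div_le_iff₀ (norm_pos_iff.mpr (h0 p.2))]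
  exact hθ p hp

theorem stepc_bound (h0 : ∀ j, lam j ≠ 0) (hΛ : ‖lam⁻¹‖ ≤ Λ) (hΛ1 : 1 ≤ Λ) (hθ0 : 0 ≤ θ)
    (hθ : ∀ p ∉ Sres lam, ‖mono p.1 lam‖ ≤ θ * ‖lam p.2‖) (hr : 0 < r) (hrs : r < s)
    {b0 b1 : Wsp k} {B : ℝ} (hB : ∀ z ∈ ball (0 : Fin k → ℂ) s, ‖Ghat lam f b0 b1 z‖ ≤ B)
    (p : Idx k) :
    ‖stepc lam r f b0 b1 p‖ ≤ θ * ‖b1 p‖ + Λ * B * mono p.1 (fun _ => r⁻¹) := by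
  have hB0 : 0 ≤ B := (norm_nonneg _).trans (hB 0 (mem_ball_self (hr.trans hrs)))
  have hmn : (0 : ℝ) ≤ mono p.1 (fun _ => r⁻¹) := by
    unfold mono; exact Finset.prod_nonneg fun i _ => by positivity
  have hc := ccoef_bound hr hrs
    (fun z hz => (norm_le_pi_norm (Ghat lam f b0 b1 z) p.2).trans (hB z hz)) p.1
  unfold stepc
  split_ifs with hp
  · rw [norm_mul, norm_neg, mul_assoc]
    have := mul_le_mul (mono_inv_le h0 hΛ hp) hc (norm_nonneg _) (by linarith)
    have h2 : 0 ≤ θ * ‖b1 p‖ := by positivity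
    linarith
  · refine (norm_add_le _ _).trans (add_le_add ?_ (hc.trans ?_))
    · rw [norm_mul]
      exact mul_le_mul_of_nonneg_right (ratio_le h0 hθ hp) (norm_nonneg _)
    · rw [mul_assoc]
      exact le_mul_of_one_le_left (by positivity) hΛ1

theorem stepc_sub_bound (h0 : ∀ j, lam j ≠ 0) (hΛ : ‖lam⁻¹‖ ≤ Λ) (hΛ1 : 1 ≤ Λ) (hθ0 : 0 ≤ θ)
    (hθ : ∀ p ∉ Sres lam, ‖mono p.1 lam‖ ≤ θ * ‖lam p.2‖) (hr : 0 < r) (hrs : r < s)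
    {b0 b1 b0' b1' : Wsp k} {B : ℝ}
    (hd : DifferentiableOn ℂ (Ghat lam f b0 b1) (ball 0 s))
    (hd' : DifferentiableOn ℂ (Ghat lam f b0' b1') (ball 0 s))
    (hB : ∀ z ∈ ball (0 : Fin k → ℂ) s, ‖Ghat lam f b0 b1 z - Ghat lam f b0' b1' z‖ ≤ B)
    (p : Idx k) :
    ‖stepc lam r f b0 b1 p - stepc lam r f b0' b1' p‖ ≤
      θ * ‖(b1 - b1') p‖ + Λ * B * mono p.1 (fun _ => r⁻¹) := by
  have hB0 : 0 ≤ B := (norm_nonneg _).trans (hB 0 (mem_ball_self (hr.trans hrs)))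
  have hmn : (0 : ℝ) ≤ mono p.1 (fun _ => r⁻¹) := by
    unfold mono; exact Finset.prod_nonneg fun i _ => by positivity
  have hc := ccoef_bound (g := fun z => Ghat lam f b0 b1 z p.2 - Ghat lam f b0' b1' z p.2) hr hrs
    (fun z hz => (norm_le_pi_norm (Ghat lam f b0 b1 z - Ghat lam f b0' b1' z) p.2).trans (hB z hz))
    p.1
  rw [ccoef_sub (g := fun z => Ghat lam f b0 b1 z p.2) (g' := fun z => Ghat lam f b0' b1' z p.2)
    hr hrs (fun z hz => ((continuous_apply p.2).continuousAt.comp_continuousWithinAt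
      (hd.continuousOn z hz))) (fun z hz =>
      ((continuous_apply p.2).continuousAt.comp_continuousWithinAt
      (hd'.continuousOn z hz)))] at hc
  unfold stepc
  split_ifs with hp
  · rw [← mul_sub, norm_mul, norm_neg, mul_assoc]
    have := mul_le_mul (mono_inv_le h0 hΛ hp) hc (norm_nonneg _) (by linarith)
    have h2 : 0 ≤ θ * ‖(b1 - b1') p‖ := by positivity
    linarith
  · rw [add_sub_add_comm, ← mul_sub]
    refine (norm_add_le _ _).trans (add_le_add ?_ (hc.trans ?_))
    · rw [norm_mul]
      exact mul_le_mul_of_nonneg_right (ratio_le h0 hθ hp) (norm_nonneg _)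
    · rw [mul_assoc]
      exact le_mul_of_one_le_left (by positivity) hΛ1

theorem majorant_summable (hr1 : 1 < r) (b : Wsp k) (B : ℝ) :
    Summable (fun p : Idx k => θ * ‖b p‖ + Λ * B * mono p.1 (fun _ => r⁻¹)) :=
  ((Wsp_summable b).mul_left θ).add
    ((idx_summable (by positivity) (inv_lt_one_of_one_lt₀ hr1)).mul_left _)

theorem majorant_tsum (hr1 : 1 < r) (b : Wsp k) (B : ℝ) :
    ∑' p : Idx k, (θ * ‖b p‖ + Λ * B * mono p.1 (fun _ => r⁻¹)) =
      θ * ‖b‖ + Λ * B * ∑' p : Idx k, mono p.1 (fun _ => r⁻¹) := by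
  rw [((Wsp_summable b).mul_left θ).tsum_add
    ((idx_summable (by positivity) (inv_lt_one_of_one_lt₀ hr1)).mul_left _), tsum_mul_left,
    tsum_mul_left, Wsp_norm]

theorem stepc_summable (h0 : ∀ j, lam j ≠ 0) (hΛ : ‖lam⁻¹‖ ≤ Λ) (hΛ1 : 1 ≤ Λ) (hθ0 : 0 ≤ θ)
    (hθ : ∀ p ∉ Sres lam, ‖mono p.1 lam‖ ≤ θ * ‖lam p.2‖) (hr1 : 1 < r) (hrs : r < s)
    {b0 b1 : Wsp k} {B : ℝ} (hB : ∀ z ∈ ball (0 : Fin k → ℂ) s, ‖Ghat lam f b0 b1 z‖ ≤ B) :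
    Summable (fun p => ‖stepc lam r f b0 b1 p‖) :=
  Summable.of_nonneg_of_le (fun _ => norm_nonneg _)
    (stepc_bound h0 hΛ hΛ1 hθ0 hθ (by linarith) hrs hB) (majorant_summable hr1 b1 B)

theorem exists_b (h0 : ∀ j, lam j ≠ 0) (hΛ : ‖lam⁻¹‖ ≤ Λ) (hΛ1 : 1 ≤ Λ) (hθ0 : 0 ≤ θ)
    (hθ1 : θ < 1)
    (hθ : ∀ p ∉ Sres lam, ‖mono p.1 lam‖ ≤ θ * ‖lam p.2‖) (hr1 : 1 < r) (hrs : r < s)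
    (hm : ∀ p ∈ Sres lam, deg p.1 ≤ m) (hκ1 : κ < 1) (hs : ‖lam‖ * s ≤ κ)
    (hδ1 : δ ≤ 1) (hδ : 0 ≤ δ) (hη : 0 ≤ η)
    (hsmall1 : Λ * ((Λ * (2 / (1 - κ)) + 4 * 3 ^ m) * (η + δ)) *
      (∑' p : Idx k, mono p.1 (fun _ => r⁻¹)) ≤ (1 - θ) / 2)
    (hsmall2 : Λ * (Λ * η) * (∑' p : Idx k, mono p.1 (fun _ => r⁻¹)) ≤ (1 - θ) / 2 * δ)
    (f : ℕ → (Fin k → ℂ) → (Fin k → ℂ)) (hf : ∀ n, Differentiable ℂ (f n))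
    (hfz : ∀ n, ∀ z ∈ ball (0 : Fin k → ℂ) s, ‖f n z‖ ≤ κ)
    (hfl : ∀ n, ∀ z ∈ ball (0 : Fin k → ℂ) s, ‖f n z - lam * z‖ ≤ η) :
    ∃ b : ℕ → Wsp k, (∀ n, ‖b n‖ ≤ δ) ∧ ∀ n p, b n p = stepc lam r (f n) (b n) (b (n + 1)) p := by
  set Cr := ∑' p : Idx k, mono p.1 (fun _ => r⁻¹) with hCr
  set K := (Λ * (2 / (1 - κ)) + 4 * 3 ^ m) with hK
  have hlz : ∀ z ∈ ball (0 : Fin k → ℂ) s, ‖lam * z‖ ≤ κ := fun z hz => lam_mul_le hs hz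
  have hsum : ∀ n (b0 b1 : Wsp k), ‖b0‖ ≤ δ → ‖b1‖ ≤ δ →
      Summable (fun p => ‖stepc lam r (f n) b0 b1 p‖) := fun n b0 b1 hb0 hb1 =>
    stepc_summable h0 hΛ hΛ1 hθ0 hθ hr1 hrs (fun z hz =>
      Ghat_norm hm hκ1 hΛ hδ1 hη hδ hb0 hb1 (hlz z hz) (hfz n z hz) (hfl n z hz))
  have hlip : ∀ n (b0 b1 b0' b1' : Wsp k) d, ‖b0‖ ≤ δ → ‖b1‖ ≤ δ → ‖b0'‖ ≤ δ → ‖b1'‖ ≤ δ →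
      ‖b0 - b0'‖ ≤ d → ‖b1 - b1'‖ ≤ d → ‖toW (stepc lam r (f n) b0 b1) -
        toW (stepc lam r (f n) b0' b1')‖ ≤ (θ + (1 - θ) / 2) * d := by
    intro n b0 b1 b0' b1' d hb0 hb1 hb0' hb1' hd0 hd1
    have hd : 0 ≤ d := (norm_nonneg _).trans hd0
    have := toW_sub_norm_le (hsum n b0 b1 hb0 hb1) (hsum n b0' b1' hb0' hb1')
      (majorant_summable hr1 (b1 - b1') (K * (η + δ) * d))
      (stepc_sub_bound h0 hΛ hΛ1 hθ0 hθ (by linarith) hrs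
        (Ghat_diff hm hκ1 hδ1 (hf n) hb1 hlz (hfz n))
        (Ghat_diff hm hκ1 hδ1 (hf n) hb1' hlz (hfz n))
        (fun z hz => Ghat_lip hm hκ1 hΛ hδ1 hη hδ hb1 hb0' hb1' hd0 hd1 (hlz z hz) (hfz n z hz)
          (hfl n z hz)))
    rw [majorant_tsum hr1] at this
    refine this.trans ?_
    have e1 : θ * ‖b1 - b1'‖ ≤ θ * d := mul_le_mul_of_nonneg_left hd1 hθ0
    have e2 := mul_le_mul_of_nonneg_right hsmall1 hd
    nlinarith
  have hz : ∀ n, ‖toW (stepc lam r (f n) 0 0)‖ ≤ (1 - θ) / 2 * δ := by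
    intro n
    have := toW_norm_le (majorant_summable hr1 (0 : Wsp k) (Λ * η))
      (stepc_bound (b0 := 0) (b1 := 0) (f := f n) h0 hΛ hΛ1 hθ0 hθ (by linarith) hrs
        (fun z hz => by
          rw [Ghat_zero]
          exact (norm_mul_le _ _).trans
            (mul_le_mul hΛ (hfl n z hz) (norm_nonneg _) ((norm_nonneg _).trans hΛ))))
    rw [majorant_tsum hr1, norm_zero, mul_zero, zero_add] at this
    exact this.trans hsmall2
  obtain ⟨b, hb, hbf⟩ := seq_fixed_point (W := Wsp k) δ (θ + (1 - θ) / 2) hδ (by linarith)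
    (by linarith) (fun n b0 b1 => toW (stepc lam r (f n) b0 b1)) (fun n b0 b1 hb0 hb1 => by
      have h3 := hlip n b0 b1 0 0 δ hb0 hb1 (by simpa using hδ) (by simpa using hδ)
        (by simpa using hb0) (by simpa using hb1)
      have h4 := hz n
      calc ‖toW (stepc lam r (f n) b0 b1)‖ = ‖(toW (stepc lam r (f n) b0 b1) -
            toW (stepc lam r (f n) 0 0)) + toW (stepc lam r (f n) 0 0)‖ := by
            rw [sub_add_cancel]
        _ ≤ _ := norm_add_le _ _
        _ ≤ δ := by linarith) hlip
  refine ⟨b, hb, fun n p => ?_⟩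
  have := congrArg (fun w : Wsp k => w p) (hbf n)
  simp only at this
  rw [this, toW_apply (hsum n _ _ (hb n) (hb (n + 1)))]

theorem mono_mul (α : Fin k → ℕ) (x y : Fin k → ℂ) : mono α (x * y) = mono α x * mono α y := by
  unfold mono
  rw [← Finset.prod_mul_distrib]
  simp [mul_pow]

theorem mono_ne_zero (h0 : ∀ j, lam j ≠ 0) (α : Fin k → ℕ) : mono α lam ≠ 0 := by
  unfold mono
  exact Finset.prod_ne_zero_iff.mpr fun i _ => pow_ne_zero _ (h0 i)

theorem functional_eq (h0 : ∀ j, lam j ≠ 0) (hΛ : ‖lam⁻¹‖ ≤ Λ)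
    (hr1 : 1 < r) (hrs : r < s)
    (hm : ∀ p ∈ Sres lam, deg p.1 ≤ m) (hκ1 : κ < 1) (hs : ‖lam‖ * s ≤ κ)
    (hδ1 : δ ≤ 1) (hδ : 0 ≤ δ) (hη : 0 ≤ η)
    (hf : Differentiable ℂ f)
    (hfz : ∀ z ∈ ball (0 : Fin k → ℂ) s, ‖f z‖ ≤ κ)
    (hfl : ∀ z ∈ ball (0 : Fin k → ℂ) s, ‖f z - lam * z‖ ≤ η)
    {b0 b1 : Wsp k} (hb0 : ‖b0‖ ≤ δ) (hb1 : ‖b1‖ ≤ δ)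
    (hb : ∀ p, b0 p = stepc lam r f b0 b1 p) (z : Fin k → ℂ) (hz : ‖z‖ ≤ 1) :
    z + ev (Sres lam)ᶜ b0 z = lam⁻¹ * (f z + ev (Sres lam)ᶜ b1 (f z)) +
      ev (Sres lam) b0 (f z + ev (Sres lam)ᶜ b1 (f z)) := by
  have hlz : ∀ z ∈ ball (0 : Fin k → ℂ) s, ‖lam * z‖ ≤ κ := fun z hz => lam_mul_le hs hz
  have hzs : z ∈ ball (0 : Fin k → ℂ) s := mem_ball_zero_iff.mpr (by linarith)
  have hlz1 : ‖lam * z‖ ≤ 1 := (hlz z hzs).trans hκ1.le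
  have key : ev (Sres lam)ᶜ b0 z = lam⁻¹ * ev (Sres lam)ᶜ b1 (lam * z) + Ghat lam f b0 b1 z +
      ev (Sres lam) b0 (lam * z) := by
    funext j
    have s1 := (ev_summable (hTu lam) zero_le_one b0 hz j).hasSum
    have s2 := (ev_summable (hTu lam) zero_le_one b1 hlz1 j).hasSum
    have s3 := (ev_summable (hTv hm le_rfl) (by positivity) b0 hlz1 j).hasSum
    have s4 := ccoef_hasSum (g := fun z => Ghat lam f b0 b1 z j) (by linarith : 0 < r) hrs
      (fun z hz => (differentiableWithinAt_pi.mp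
        (Ghat_diff hm hκ1 hδ1 hf hb1 hlz hfz z hz)) j)
      (fun z hz => (norm_le_pi_norm (Ghat lam f b0 b1 z) j).trans
        (Ghat_norm hm hκ1 hΛ hδ1 hη hδ hb0 hb1 (hlz z hz) (hfz z hz) (hfl z hz))) z (by linarith)
    have s5 := ((s2.mul_left (lam j)⁻¹).add s4).add s3
    refine s1.unique (HasSum.congr_fun s5 ?_)
    intro α
    by_cases hp : (α, j) ∈ Sres lam
    · have e := hb (α, j)
      unfold stepc at e
      rw [if_pos hp] at e
      simp only at e
      simp only [Set.indicator, Set.mem_compl_iff, hp, not_true_eq_false, if_true, if_false]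
      rw [mono_mul, e]
      have := mono_ne_zero h0 α
      field_simp
      ring
    · have e := hb (α, j)
      unfold stepc at e
      rw [if_neg hp] at e
      simp only at e
      simp only [Set.indicator, Set.mem_compl_iff, hp, not_false_eq_true, if_true, if_false]
      rw [mono_mul, e]
      ring
  have hz2 : lam⁻¹ * (lam * z) = z := by
    funext j
    simp [h0 j]
  rw [key]
  unfold Ghat
  linear_combination (- hz2)
end

theorem perturb {E : Type*} [NormedAddCommGroup E] [NormedSpace ℂ E] [CompleteSpace E]
    {w : E → E} {R R' e : ℝ} (hd : DifferentiableOn ℂ w (ball 0 R))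
    (hl : ∀ x y, ‖x‖ < R → ‖y‖ < R → ‖w x - w y‖ ≤ 1 / 2 * ‖x - y‖)
    (he : ∀ x, ‖x‖ < R → ‖w x‖ ≤ e) (hR : R' + e < R) (he0 : 0 ≤ e) :
    ∃ g : E → E, DifferentiableOn ℂ g (ball 0 R') ∧
      ∀ y ∈ ball (0 : E) R', ‖g y‖ ≤ ‖y‖ + e ∧ g y + w (g y) = y := by
  have hex : ∀ y ∈ ball (0 : E) R', ∃ x, ‖x‖ ≤ ‖y‖ + e ∧ x + w x = y := by
    intro y hy
    rw [mem_ball_zero_iff] at hy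
    let s : Set E := closedBall 0 (‖y‖ + e)
    have hs : ∀ x ∈ s, ‖x‖ < R := fun x hx => by
      have := mem_closedBall_zero_iff.mp hx
      linarith
    have hmaps : Set.MapsTo (fun x => y - w x) s s := by
      intro x hx
      rw [mem_closedBall_zero_iff]
      exact (norm_sub_le _ _).trans (by linarith [he x (hs x hx)])
    have hcontr : ContractingWith (1 / 2) (Set.MapsTo.restrict (fun x => y - w x) s s hmaps) := by
      refine ⟨by rw [← NNReal.coe_lt_coe]; norm_num, ?_⟩
      apply LipschitzWith.of_dist_le_mul
      rintro ⟨b, hb⟩ ⟨b', hb'⟩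
      rw [Subtype.dist_eq, Subtype.dist_eq]
      simp only [Set.MapsTo.val_restrict_apply]
      rw [dist_eq_norm, dist_eq_norm, sub_sub_sub_cancel_left, norm_sub_rev b b']
      simpa using hl b' b (hs _ hb') (hs _ hb)
    obtain ⟨x, hx, hfix, -⟩ := hcontr.exists_fixedPoint' isClosed_closedBall.isComplete hmaps
      (x := 0) (mem_closedBall_self (by positivity)) (edist_ne_top _ _)
    refine ⟨x, mem_closedBall_zero_iff.mp hx, ?_⟩
    have : y - w x = x := hfix
    exact (sub_eq_iff_eq_add.mp this).symm
  choose! g hg using hex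
  have hgR : ∀ y ∈ ball (0 : E) R', ‖g y‖ < R := fun y hy => by
    have := (hg y hy).1
    have h2 := mem_ball_zero_iff.mp hy
    linarith
  refine ⟨g, ?_, hg⟩
  intro a ha
  apply DifferentiableAt.differentiableWithinAt
  have hnb : ∀ᶠ y in 𝓝 a, y ∈ ball (0 : E) R' := isOpen_ball.mem_nhds ha
  have hlip : ∀ y ∈ ball (0 : E) R', ‖g y - g a‖ ≤ 2 * ‖y - a‖ := by
    intro y hy
    have h1 := (hg y hy).2
    have h2 := (hg a ha).2
    have h3 := hl _ _ (hgR y hy) (hgR a ha)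
    have h4 : g y - g a = (y - a) - (w (g y) - w (g a)) := by
      rw [eq_sub_iff_add_eq]
      calc g y - g a + (w (g y) - w (g a)) = (g y + w (g y)) - (g a + w (g a)) := by abel
        _ = y - a := by rw [h1, h2]
    have h5 := norm_sub_le (y - a) (w (g y) - w (g a))
    rw [← h4] at h5
    linarith
  have hcont : ContinuousAt g a := by
    rw [Metric.continuousAt_iff']
    intro ε hε
    have : ∀ᶠ y in 𝓝 a, y ∈ ball a (ε / 2) := ball_mem_nhds a (by positivity)
    filter_upwards [this, hnb] with y h1 h2
    rw [dist_eq_norm]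
    rw [mem_ball, dist_eq_norm] at h1
    linarith [hlip y h2]
  have hwd : HasFDerivAt w (fderiv ℂ w (g a)) (g a) :=
    (hd.differentiableAt (isOpen_ball.mem_nhds (mem_ball_zero_iff.mpr (hgR a ha)))).hasFDerivAt
  have hwn : ‖fderiv ℂ w (g a)‖ ≤ 1 / 2 := by
    apply hwd.le_of_lip' (by norm_num)
    have : ∀ᶠ y in 𝓝 (g a), y ∈ ball (0 : E) R :=
      isOpen_ball.mem_nhds (mem_ball_zero_iff.mpr (hgR a ha))
    filter_upwards [this] with y hy
    exact hl _ _ (mem_ball_zero_iff.mp hy) (hgR a ha)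
  let U := Units.oneSub (-(fderiv ℂ w (g a))) (by rw [norm_neg]; linarith)
  let A := ContinuousLinearEquiv.ofUnit U
  have hA : (A : E →L[ℂ] E) = ContinuousLinearMap.id ℂ E + fderiv ℂ w (g a) := by
    ext x
    change (1 - -(fderiv ℂ w (g a)) : E →L[ℂ] E) x = _
    simp
  have hf : HasFDerivAt (fun x => x + w x) (A : E →L[ℂ] E) (g a) := by
    rw [hA]
    exact (hasFDerivAt_id _).add hwd
  exact (HasFDerivAt.of_local_left_inverse hcont hf
    (by filter_upwards [hnb] with y hy; exact (hg y hy).2)).differentiableAt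

section
variable {k : ℕ} {lam : Fin k → ℂ} {δ : ℝ} {m : ℕ}

/-- square roots of moduli -/
def muv (lam : Fin k → ℂ) : Fin k → ℂ := fun j => ((Real.sqrt ‖lam j‖ : ℝ) : ℂ)

theorem muv_norm (lam : Fin k → ℂ) (j : Fin k) : ‖muv lam j‖ = Real.sqrt ‖lam j‖ := by
  unfold muv
  rw [Complex.norm_real, Real.norm_of_nonneg (Real.sqrt_nonneg _)]

theorem muv_ne (h0 : ∀ j, lam j ≠ 0) (j : Fin k) : muv lam j ≠ 0 := by
  rw [← norm_pos_iff, muv_norm]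
  exact Real.sqrt_pos.mpr (norm_pos_iff.mpr (h0 j))

theorem muv_sq (lam : Fin k → ℂ) (j : Fin k) : ‖lam j‖ = ‖muv lam j‖ * ‖muv lam j‖ := by
  rw [muv_norm, Real.mul_self_sqrt (norm_nonneg _)]

theorem muv_lt (h1 : ‖lam‖ < 1) : ‖muv lam‖ < 1 := by
  rw [pi_norm_lt_iff zero_lt_one]
  intro j
  rw [muv_norm, Real.sqrt_lt' one_pos]
  have := norm_le_pi_norm lam j
  linarith

theorem muv_Sres {p : Idx k} (hp : p ∈ Sres lam) : ‖muv lam p.2‖ ≤ ‖mono p.1 (muv lam)‖ := by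
  have h : ‖mono p.1 lam‖ = ‖mono p.1 (muv lam)‖ * ‖mono p.1 (muv lam)‖ := by
    unfold mono
    rw [norm_prod, norm_prod, ← Finset.prod_mul_distrib]
    refine Finset.prod_congr rfl fun i _ => ?_
    rw [norm_pow, norm_pow, muv_sq, mul_pow]
  have hp' : ‖lam p.2‖ ≤ ‖mono p.1 lam‖ := hp
  rw [h, muv_sq] at hp'
  nlinarith [norm_nonneg (muv lam p.2), norm_nonneg (mono p.1 (muv lam))]

end

section
variable {k : ℕ} {lam : Fin k → ℂ} {δ : ℝ} {m : ℕ}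

theorem mono_pow' (α : Fin k → ℕ) (x : Fin k → ℂ) (n : ℕ) : mono α (x ^ n) = mono α x ^ n := by
  unfold mono
  rw [← Finset.prod_pow]
  refine Finset.prod_congr rfl fun i _ => ?_
  rw [Pi.pow_apply, ← pow_mul, ← pow_mul, mul_comm]

open Classical in
theorem conj_ev (h0 : ∀ j, lam j ≠ 0) (b : Wsp k) (n : ℕ) :
    ∃ b' : Wsp k, ‖b'‖ ≤ ‖b‖ ∧ ∀ x y, x = muv lam ^ n * y →
      muv lam ^ n * ev (Sres lam) b y = ev (Sres lam) b' x := by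
  let c : Idx k → ℂ := fun p => if p ∈ Sres lam then
    b p * (muv lam p.2 ^ n / mono p.1 (muv lam) ^ n) else 0
  have hc : ∀ p, ‖c p‖ ≤ ‖b p‖ := by
    intro p
    simp only [c]
    split_ifs with hp
    · rw [norm_mul, ← div_pow, norm_pow, norm_div]
      refine mul_le_of_le_one_right (norm_nonneg _) (pow_le_one₀ (by positivity) ?_)
      exact div_le_one_of_le₀ (muv_Sres hp) (norm_nonneg _)
    · simp
  have hcs : Summable (fun p => ‖c p‖) :=
    Summable.of_nonneg_of_le (fun _ => norm_nonneg _) hc (Wsp_summable b)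
  refine ⟨toW c, ?_, ?_⟩
  · rw [Wsp_norm b]
    exact toW_norm_le (Wsp_summable b) hc
  · rintro x y rfl
    funext j
    unfold ev
    rw [Pi.mul_apply, ← tsum_mul_left]
    refine tsum_congr fun α => ?_
    by_cases hp : (α, j) ∈ Sres lam
    · rw [Set.indicator_of_mem hp, Set.indicator_of_mem hp, toW_apply hcs, mono_mul, mono_pow']
      simp only [c, hp, if_true, Pi.pow_apply]
      have := mono_ne_zero (muv_ne h0) α
      field_simp
    · rw [Set.indicator_of_notMem hp, Set.indicator_of_notMem hp]
      simp

/-- the model map (inverse direction) -/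
def tmap (lam : Fin k → ℂ) (b : Wsp k) (x : Fin k → ℂ) : Fin k → ℂ :=
  lam⁻¹ * x + ev (Sres lam) b x

theorem tmap_diff (hm : ∀ p ∈ Sres lam, deg p.1 ≤ m) (b : Wsp k) :
    Differentiable ℂ (tmap lam b) := by
  intro x
  have hR : (1 : ℝ) ≤ ‖x‖ + 1 := by linarith [norm_nonneg x]
  have h := (ev_differentiableOn (hTv hm hR) (by positivity) b).differentiableAt
    (isOpen_ball.mem_nhds (mem_ball_zero_iff.mpr (by linarith : ‖x‖ < ‖x‖ + 1)))
  have d1 : DifferentiableAt ℂ (fun z : Fin k → ℂ => lam⁻¹ * z) x := by fun_prop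
  exact d1.add h

theorem tmap_inv (h0 : ∀ j, lam j ≠ 0) (h1 : ‖lam‖ < 1) (hm : ∀ p ∈ Sres lam, deg p.1 ≤ m)
    (hδ : 0 ≤ δ) (hδ2 : 2 * 2 ^ m * δ ≤ 1 / 2) (hδ3 : ‖muv lam‖ / 2 + δ < 1 / 2)
    {b : Wsp k} (hb : ‖b‖ ≤ δ) :
    ∃ τ : (Fin k → ℂ) → (Fin k → ℂ), Differentiable ℂ τ ∧ Function.LeftInverse τ (tmap lam b) ∧
      Function.RightInverse τ (tmap lam b) ∧
      ∀ n x, ‖muv lam ^ (n + 1) * x‖ < 1 / 2 → ‖muv lam ^ n * τ x‖ < 1 / 2 := by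
  have hμ1 := muv_lt h1
  have hcancel : ∀ (n : ℕ) (x : Fin k → ℂ), muv lam ^ n * ((muv lam)⁻¹ ^ n * x) = x := by
    intro n x
    funext j
    have := muv_ne h0 j
    simp only [Pi.mul_apply, Pi.pow_apply, Pi.inv_apply]
    rw [← mul_assoc, ← mul_pow, mul_inv_cancel₀ this, one_pow, one_mul]
  have hcancel' : ∀ (n : ℕ) (x : Fin k → ℂ), (muv lam)⁻¹ ^ n * (muv lam ^ n * x) = x := by
    intro n x
    rw [mul_left_comm, hcancel]
  have hcl : ∀ (x : Fin k → ℂ), lam * (lam⁻¹ * x) = x := by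
    intro x
    funext j
    simp [h0 j]
  have hcl' : ∀ (x : Fin k → ℂ), lam⁻¹ * (lam * x) = x := by
    intro x
    funext j
    simp [h0 j]
  choose b' hb' hconj using conj_ev h0 b
  let w : ℕ → (Fin k → ℂ) → (Fin k → ℂ) := fun n x => lam * ev (Sres lam) (b' n) x
  have hev : ∀ n x, ‖x‖ < 1 → ‖w n x‖ ≤ δ := by
    intro n x hx
    have e1 := ev_norm_le (hTv hm le_rfl) (by positivity) (b' n) hx.le
    rw [one_pow, one_mul] at e1
    have e2 := norm_mul_le lam (ev (Sres lam) (b' n) x)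
    have e3 := hb' n
    have e4 : ‖lam‖ * ‖ev (Sres lam) (b' n) x‖ ≤ 1 * ‖ev (Sres lam) (b' n) x‖ :=
      mul_le_mul_of_nonneg_right h1.le (norm_nonneg _)
    linarith
  have hlip : ∀ n x y, ‖x‖ < 1 → ‖y‖ < 1 → ‖w n x - w n y‖ ≤ 1 / 2 * ‖x - y‖ := by
    intro n x y hx hy
    have e1 := ev_lip (hTv hm one_le_two) (by positivity) (b' n) (R' := 1) (by norm_num) hx.le hy.le
    have e2 := norm_mul_le lam (ev (Sres lam) (b' n) x - ev (Sres lam) (b' n) y)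
    rw [mul_sub] at e2
    have e4 : ‖lam‖ * ‖ev (Sres lam) (b' n) x - ev (Sres lam) (b' n) y‖
      ≤ 1 * ‖ev (Sres lam) (b' n) x - ev (Sres lam) (b' n) y‖ :=
      mul_le_mul_of_nonneg_right h1.le (norm_nonneg _)
    have e5 : 2 * 2 ^ m / (2 - 1) * ‖b' n‖ ≤ 1 / 2 := by
      refine le_trans ?_ hδ2
      rw [show (2 : ℝ) - 1 = 1 by norm_num, div_one]
      exact mul_le_mul_of_nonneg_left ((hb' n).trans hb) (by positivity)
    have e6 := mul_le_mul_of_nonneg_right e5 (norm_nonneg (x - y))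
    simp only [w]
    linarith
  have hdw : ∀ n, DifferentiableOn ℂ (w n) (ball 0 1) := fun n =>
    (ev_differentiableOn (hTv hm le_rfl) (by positivity) (b' n)).const_mul lam
  have hμ0 : 0 ≤ ‖muv lam‖ := norm_nonneg _
  choose g hgd hg using fun n => perturb (R' := 1 / 2) (hdw n) (hlip n) (hev n) (by linarith) hδ
  -- conjugation
  have hkey : ∀ n y, lam * (muv lam ^ n * tmap lam b y) =
      muv lam ^ n * y + w n (muv lam ^ n * y) := by
    intro n y
    simp only [w]
    rw [← hconj n _ y rfl]
    unfold tmap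
    calc lam * (muv lam ^ n * (lam⁻¹ * y + ev (Sres lam) b y)) =
        muv lam ^ n * (lam * (lam⁻¹ * y)) + lam * (muv lam ^ n * ev (Sres lam) b y) := by ring
      _ = _ := by rw [hcl]
  have hmucancel : ∀ n (x y : Fin k → ℂ), muv lam ^ n * x = muv lam ^ n * y → x = y := by
    intro n x y h
    rw [← hcancel' n x, h, hcancel']
  have hlim : ∀ x : Fin k → ℂ, ∀ c > 0, ∀ᶠ n in atTop, ‖muv lam ^ n * x‖ < c := by
    intro x c hc
    have t1 : Tendsto (fun n => ‖muv lam‖ ^ n * ‖x‖) atTop (𝓝 0) := by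
      simpa using (tendsto_pow_atTop_nhds_zero_of_lt_one hμ0 hμ1).mul_const ‖x‖
    filter_upwards [t1.eventually_lt_const hc, eventually_ge_atTop 1] with n hn hn1
    refine lt_of_le_of_lt ((norm_mul_le _ _).trans ?_) hn
    exact mul_le_mul_of_nonneg_right (norm_pow_le' _ (by omega)) (norm_nonneg _)
  have hinj : Function.Injective (tmap lam b) := by
    intro x y hxy
    obtain ⟨n, hn1, hn2⟩ := ((hlim x 1 one_pos).and (hlim y 1 one_pos)).exists
    apply hmucancel n
    have e1 := hkey n x
    rw [hxy, hkey n y] at e1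
    have e2 := hlip n _ _ hn1 hn2
    have e3 : muv lam ^ n * x - muv lam ^ n * y = -(w n (muv lam ^ n * x) - w n (muv lam ^ n * y)) := by
      linear_combination -e1
    rw [← norm_neg, ← e3] at e2
    have e4 : ‖muv lam ^ n * x - muv lam ^ n * y‖ ≤ 0 := by linarith
    rw [← sub_eq_zero]
    exact norm_le_zero_iff.mp e4
  have hright : ∀ n x, ‖lam * (muv lam ^ n * x)‖ < 1 / 2 →
      tmap lam b ((muv lam)⁻¹ ^ n * g n (lam * (muv lam ^ n * x))) = x := by
    intro n x hx
    have e1 := hkey n ((muv lam)⁻¹ ^ n * g n (lam * (muv lam ^ n * x)))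
    rw [hcancel, (hg n _ (mem_ball_zero_iff.mpr hx)).2] at e1
    apply hmucancel n
    have e2 := congrArg (fun y => lam⁻¹ * y) e1
    simp only [hcl'] at e2
    exact e2
  have hsmall : ∀ x : Fin k → ℂ, ∃ n, ‖lam * (muv lam ^ n * x)‖ < 1 / 2 := by
    intro x
    obtain ⟨n, hn⟩ := (hlim (lam * x) (1 / 2) (by norm_num)).exists
    exact ⟨n, by rwa [mul_left_comm] at hn⟩
  have hsurj : Function.Surjective (tmap lam b) := by
    intro x
    obtain ⟨n, hn⟩ := hsmall x
    exact ⟨_, hright n x hn⟩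
  let e := Equiv.ofBijective _ ⟨hinj, hsurj⟩
  have her : ∀ x, tmap lam b (e.symm x) = x := fun x => e.apply_symm_apply x
  have hform : ∀ n x, ‖lam * (muv lam ^ n * x)‖ < 1 / 2 →
      e.symm x = (muv lam)⁻¹ ^ n * g n (lam * (muv lam ^ n * x)) := by
    intro n x hx
    apply hinj
    rw [her, hright n x hx]
  refine ⟨e.symm, ?_, fun x => e.symm_apply_apply x, her, ?_⟩
  · intro x
    obtain ⟨n, hn⟩ := hsmall x
    have hd1 : Differentiable ℂ (fun x : Fin k → ℂ => lam * (muv lam ^ n * x)) := by fun_prop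
    have hev : (e.symm : (Fin k → ℂ) → (Fin k → ℂ)) =ᶠ[𝓝 x]
        fun x => (muv lam)⁻¹ ^ n * g n (lam * (muv lam ^ n * x)) := by
      have : ∀ᶠ y in 𝓝 x, ‖lam * (muv lam ^ n * y)‖ < 1 / 2 :=
        (hd1.continuous.norm.tendsto x).eventually_lt_const hn
      filter_upwards [this] with y hy
      exact hform n y hy
    refine DifferentiableAt.congr_of_eventuallyEq ?_ hev
    refine DifferentiableAt.const_mul ?_ _
    exact DifferentiableAt.comp (g := g n) x ((hgd n).differentiableAt
      (isOpen_ball.mem_nhds (mem_ball_zero_iff.mpr hn))) (hd1 x)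
  · intro n x hx
    have e1 : ‖lam * (muv lam ^ n * x)‖ ≤ ‖muv lam‖ / 2 := by
      rw [pi_norm_le_iff_of_nonneg (by positivity)]
      intro j
      have q1 := norm_le_pi_norm (muv lam ^ (n + 1) * x) j
      have q2 := norm_le_pi_norm (muv lam) j
      simp only [Pi.mul_apply, Pi.pow_apply, norm_mul] at q1 ⊢
      rw [muv_sq]
      calc _ = ‖muv lam j‖ * (‖muv lam j ^ (n + 1)‖ * ‖x j‖) := by rw [pow_succ, norm_mul]; ring
        _ ≤ ‖muv lam‖ * (1 / 2) := mul_le_mul q2 (by linarith) (by positivity) hμ0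
        _ = _ := by ring
    have e2 : ‖lam * (muv lam ^ n * x)‖ < 1 / 2 := by linarith
    rw [hform n x e2, hcancel]
    have := (hg n _ (mem_ball_zero_iff.mpr e2)).1
    linarith
end

section
variable {E : Type*} [NormedAddCommGroup E] [NormedSpace ℂ E]

theorem seqComp_inv {f fi : ℕ → E → E} (hf : ∀ n, Differentiable ℂ (f n))
    (hfi : ∀ n, Differentiable ℂ (fi n)) (hl : ∀ n, Function.LeftInverse (fi n) (f n))
    (hr : ∀ n, Function.RightInverse (fi n) (f n)) (n : ℕ) :
    Differentiable ℂ (seqComp f n) ∧ ∃ Fi : E → E, Differentiable ℂ Fi ∧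
      Function.LeftInverse Fi (seqComp f n) ∧ Function.RightInverse Fi (seqComp f n) := by
  induction n with
  | zero => exact ⟨differentiable_id, id, differentiable_id, fun _ => rfl, fun _ => rfl⟩
  | succ n ih =>
    obtain ⟨h1, Fi, h2, h3, h4⟩ := ih
    refine ⟨(hf n).comp h1, Fi ∘ fi n, h2.comp (hfi n), ?_, ?_⟩
    · intro x
      change Fi (fi n (f n (seqComp f n x))) = x
      rw [hl, h3]
    · intro x
      change f n (seqComp f n (Fi (fi n x))) = x
      rw [h4, hr]

theorem assembly {f fi τ τi : ℕ → E → E} {h hinv : ℕ → E → E} {N V : Set E}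
    (hf : ∀ n, Differentiable ℂ (f n))
    (hfi : ∀ n, Differentiable ℂ (fi n)) (hl : ∀ n, Function.LeftInverse (fi n) (f n))
    (hr : ∀ n, Function.RightInverse (fi n) (f n))
    (hτ : ∀ n, Differentiable ℂ (τ n))
    (hτi : ∀ n, Differentiable ℂ (τi n)) (hτl : ∀ n, Function.LeftInverse (τi n) (τ n))
    (hτr : ∀ n, Function.RightInverse (τi n) (τ n))
    (hN : IsOpen N) (hV : IsOpen V) (hfN : ∀ n, ∀ z ∈ N, f n z ∈ N)
    (hconj : ∀ n, ∀ z ∈ N, h (n + 1) (f n z) = τ n (h n z))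
    (hhd : ∀ n, DifferentiableOn ℂ (h n) N) (hhi : ∀ n, Set.InjOn (h n) N)
    (hvd : ∀ n, DifferentiableOn ℂ (hinv n) V) (hvN : ∀ n, ∀ w ∈ V, hinv n w ∈ N)
    (hvh : ∀ n, ∀ w ∈ V, h n (hinv n w) = w)
    (hex : ∀ w, ∃ n, seqComp τ (n + 1) w ∈ V) :
    ∃ (Ψ Φ : E → E), DifferentiableOn ℂ Ψ (⋃ n : ℕ, seqComp f (n + 1) ⁻¹' N) ∧
      Differentiable ℂ Φ ∧ (∀ w, Φ w ∈ (⋃ n : ℕ, seqComp f (n + 1) ⁻¹' N)) ∧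
      (∀ z ∈ (⋃ n : ℕ, seqComp f (n + 1) ⁻¹' N), Φ (Ψ z) = z) ∧ (∀ w, Ψ (Φ w) = w) := by
  have A := fun n => seqComp_inv hf hfi hl hr n
  have B := fun n => seqComp_inv hτ hτi hτl hτr n
  choose hFd Fi hFid hFl hFr using A
  choose hTd Ti hTid hTl hTr using B
  let P : ℕ → E → E := fun n z => Ti n (h n (seqComp f n z))
  let Q : ℕ → E → E := fun n w => Fi n (hinv n (seqComp τ n w))
  have hmem : ∀ n m z, n ≤ m → seqComp f n z ∈ N → seqComp f m z ∈ N := by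
    intro n m z hnm hz
    induction m, hnm using Nat.le_induction with
    | base => exact hz
    | succ m _ ih => exact hfN m _ ih
  have hPP : ∀ n m z, n ≤ m → seqComp f n z ∈ N → P m z = P n z := by
    intro n m z hnm hz
    induction m, hnm using Nat.le_induction with
    | base => rfl
    | succ m hm ih =>
      rw [← ih]
      have h1 := hmem n m z hm hz
      have h2 : h (m + 1) (seqComp f (m + 1) z) = seqComp τ (m + 1) (P m z) := by
        change h (m + 1) (f m (seqComp f m z)) = τ m (seqComp τ m (Ti m (h m (seqComp f m z))))
        rw [hTr, hconj m _ h1]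
      change Ti (m + 1) _ = _
      rw [h2, hTl]
  have hPQ : ∀ n w, seqComp τ n w ∈ V → P n (Q n w) = w := by
    intro n w hw
    change Ti n (h n (seqComp f n (Fi n (hinv n (seqComp τ n w))))) = w
    rw [hFr, hvh n _ hw, hTl]
  have hQN : ∀ n w, seqComp τ n w ∈ V → seqComp f n (Q n w) ∈ N := by
    intro n w hw
    change seqComp f n (Fi n (hinv n (seqComp τ n w))) ∈ N
    rw [hFr]
    exact hvN n _ hw
  have hPinj : ∀ n n' z z', seqComp f n z ∈ N → seqComp f n' z' ∈ N → P n z = P n' z' → z = z' := by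
    intro n n' z z' hz hz' he
    rw [← hPP n (max n n') z (le_max_left _ _) hz, ← hPP n' (max n n') z' (le_max_right _ _) hz']
      at he
    have h1 := hmem n (max n n') z (le_max_left _ _) hz
    have h2 := hmem n' (max n n') z' (le_max_right _ _) hz'
    have h3 := (hTr (max n n')).injective he
    exact (hFl _).injective (hhi _ h1 h2 h3)
  have hΩ : ∀ z ∈ (⋃ n : ℕ, seqComp f (n + 1) ⁻¹' N), ∃ n, seqComp f (n + 1) z ∈ N := by
    intro z hz
    simpa using hz
  choose! ν hν using hΩ
  choose ω hω using hex
  have hΦ : ∀ w, seqComp f (ω w + 1) (Q (ω w + 1) w) ∈ N := fun w => hQN _ _ (hω w)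
  have hΦΩ : ∀ w, Q (ω w + 1) w ∈ (⋃ n : ℕ, seqComp f (n + 1) ⁻¹' N) :=
    fun w => Set.mem_iUnion.mpr ⟨ω w, hΦ w⟩
  have hPeq : ∀ n n' z, seqComp f n z ∈ N → seqComp f n' z ∈ N → P n z = P n' z := by
    intro n n' z h1 h2
    rw [← hPP n (max n n') z (le_max_left _ _) h1, ← hPP n' (max n n') z (le_max_right _ _) h2]
  refine ⟨fun z => P (ν z + 1) z, fun w => Q (ω w + 1) w, ?_, ?_, hΦΩ, ?_, ?_⟩
  · intro z hz
    apply DifferentiableAt.differentiableWithinAt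
    have hnb : ∀ᶠ y in 𝓝 z, seqComp f (ν z + 1) y ∈ N :=
      (hFd (ν z + 1)).continuous.continuousAt.eventually (hN.mem_nhds (hν z hz))
    have hev : (fun z => P (ν z + 1) z) =ᶠ[𝓝 z] P (ν z + 1) := by
      filter_upwards [hnb] with y hy
      exact hPeq _ _ _ (hν y (Set.mem_iUnion.mpr ⟨ν z, hy⟩)) hy
    refine DifferentiableAt.congr_of_eventuallyEq ?_ hev
    refine DifferentiableAt.comp z (hTid _ _) ?_
    exact DifferentiableAt.comp z ((hhd _).differentiableAt (hN.mem_nhds (hν z hz))) (hFd _ z)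
  · intro w
    have hnb : ∀ᶠ y in 𝓝 w, seqComp τ (ω w + 1) y ∈ V :=
      (hTd (ω w + 1)).continuous.continuousAt.eventually (hV.mem_nhds (hω w))
    have hev : (fun w => Q (ω w + 1) w) =ᶠ[𝓝 w] Q (ω w + 1) := by
      filter_upwards [hnb] with y hy
      exact hPinj _ _ _ _ (hΦ y) (hQN _ _ hy) (by rw [hPQ _ _ hy, hPQ _ _ (hω y)])
    refine DifferentiableAt.congr_of_eventuallyEq ?_ hev
    refine DifferentiableAt.comp w (hFid _ _) ?_
    exact DifferentiableAt.comp w ((hvd _).differentiableAt (hV.mem_nhds (hω w))) (hTd _ w)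
  · intro z hz
    exact hPinj _ _ _ _ (hΦ _) (hν z hz) (hPQ _ _ (hω _))
  · intro w
    change P _ (Q (ω w + 1) w) = w
    rw [hPeq _ _ _ (hν _ (hΦΩ w)) (hΦ w), hPQ _ _ (hω w)]
end

theorem ev_small (C : ℝ) {c : ℝ} (hc : 0 < c) : ∀ᶠ x in 𝓝[>] (0 : ℝ), C * x < c := by
  have h : Tendsto (fun x : ℝ => C * x) (𝓝[>] 0) (𝓝 0) := by
    have : Tendsto (fun x : ℝ => C * x) (𝓝 0) (𝓝 (C * 0)) := by
      exact (continuous_const.mul continuous_id).tendsto 0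
    rw [mul_zero] at this
    exact this.mono_left nhdsWithin_le_nhds
  exact h.eventually_lt_const hc

theorem core {k : ℕ} (lam : Fin k → ℂ) (h0 : ∀ j, lam j ≠ 0) (h1 : ‖lam‖ < 1) :
    ∃ s η r0 κ : ℝ, 0 < s ∧ 0 < η ∧ 0 < r0 ∧ κ < r0 ∧
      ∀ f fi : ℕ → (Fin k → ℂ) → (Fin k → ℂ), (∀ n, Differentiable ℂ (f n)) →
        (∀ n, Differentiable ℂ (fi n)) → (∀ n, Function.LeftInverse (fi n) (f n)) →
        (∀ n, Function.RightInverse (fi n) (f n)) →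
        (∀ n, ∀ z ∈ ball (0 : Fin k → ℂ) s, ‖f n z - lam * z‖ ≤ η) →
        (∀ n, ∀ z ∈ ball (0 : Fin k → ℂ) r0, f n z ∈ closedBall (0 : Fin k → ℂ) κ) ∧
        ∃ (Ψ Φ : (Fin k → ℂ) → (Fin k → ℂ)),
          DifferentiableOn ℂ Ψ (⋃ n : ℕ, seqComp f (n + 1) ⁻¹' (ball 0 r0)) ∧
          Differentiable ℂ Φ ∧ (∀ w, Φ w ∈ (⋃ n : ℕ, seqComp f (n + 1) ⁻¹' (ball 0 r0))) ∧
          (∀ z ∈ (⋃ n : ℕ, seqComp f (n + 1) ⁻¹' (ball 0 r0)), Φ (Ψ z) = z) ∧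
          (∀ w, Ψ (Φ w) = w) := by
  obtain ⟨m, hm⟩ := exists_m lam h0 h1
  obtain ⟨θ, hθ0, hθ1, hθ⟩ := exists_theta lam h0 h1
  have hρ : 0 ≤ ‖lam‖ := norm_nonneg _
  have hμ1 := muv_lt h1
  have hμ0 : 0 ≤ ‖muv lam‖ := norm_nonneg _
  obtain ⟨s, hs1, hs2⟩ : ∃ s : ℝ, 1 < s ∧ ‖lam‖ * s < 1 := by
    refine ⟨2 / (1 + ‖lam‖), ?_, ?_⟩
    · rw [lt_div_iff₀ (by positivity)]; linarith
    · rw [mul_div_assoc', div_lt_one (by positivity)]; linarith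
  obtain ⟨κ, hκ, hκ1⟩ := exists_between (max_lt hs2 (by norm_num : (1 / 2 : ℝ) < 1))
  obtain ⟨hκs, hκh⟩ := max_lt_iff.mp hκ
  obtain ⟨r0, hκr, hr01⟩ := exists_between hκ1
  obtain ⟨r, hr1, hrs⟩ := exists_between hs1
  obtain ⟨Λ, hΛ1, hΛ⟩ : ∃ Λ : ℝ, 1 ≤ Λ ∧ ‖lam⁻¹‖ ≤ Λ := ⟨max 1 ‖lam⁻¹‖, le_max_left _ _, le_max_right _ _⟩
  set Cr := ∑' p : Idx k, mono p.1 (fun _ => r⁻¹) with hCr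
  have hCr0 : 0 ≤ Cr := tsum_nonneg fun p => by
    unfold mono
    exact Finset.prod_nonneg fun i _ => by positivity
  set K := (Λ * (2 / (1 - κ)) + 4 * 3 ^ m) with hK
  have hK0 : 0 ≤ K := by
    have : 0 < 1 - κ := by linarith
    positivity
  obtain ⟨δ, ⟨⟨⟨⟨⟨hδ1, hδ2⟩, hδ3⟩, hδ4⟩, hδ5⟩, hδ6⟩, hδ0⟩ :=
    ((((((ev_small 1 (by norm_num : (0 : ℝ) < 1)).and
      (ev_small (2 * 2 ^ m) (by norm_num : (0 : ℝ) < 1 / 2))).and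
      (ev_small 1 (by linarith : 0 < 1 / 2 - ‖muv lam‖ / 2))).and
      (ev_small (2 / (1 - r0)) (by norm_num : (0 : ℝ) < 1 / 2))).and
      (ev_small 1 (by linarith : 0 < r0 - 1 / 2))).and
      (ev_small (Λ * (K * 2) * Cr) (by linarith : 0 < (1 - θ) / 2))).and
      self_mem_nhdsWithin |>.exists
  have hδ0 : 0 < δ := hδ0
  obtain ⟨η, ⟨⟨hη1, hη2⟩, hη3⟩, hη0⟩ :=
    (((ev_small 1 hδ0).and (ev_small 1 (by linarith : 0 < κ - ‖lam‖ * s))).and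
      (ev_small (Λ * Λ * Cr) (by have : 0 < (1 - θ) / 2 := by linarith
                                 positivity : 0 < (1 - θ) / 2 * δ))).and
      self_mem_nhdsWithin |>.exists
  have hη0 : 0 < η := hη0
  rw [one_mul] at hδ1 hδ3 hδ5 hη1 hη2
  refine ⟨s, η, r0, κ, by linarith, hη0, by linarith, hκr, ?_⟩
  intro f fi hf hfi hl hr hfl
  have hfz : ∀ n, ∀ z ∈ ball (0 : Fin k → ℂ) s, ‖f n z‖ ≤ κ := by
    intro n z hz
    have e1 := lam_mul_le (le_refl (‖lam‖ * s)) hz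
    have e2 := hfl n z hz
    calc ‖f n z‖ = ‖(f n z - lam * z) + lam * z‖ := by rw [sub_add_cancel]
      _ ≤ _ := norm_add_le _ _
      _ ≤ κ := by linarith
  have hballs : ∀ z ∈ ball (0 : Fin k → ℂ) r0, z ∈ ball (0 : Fin k → ℂ) s := fun z hz =>
    ball_subset_ball (by linarith) hz
  have hfk : ∀ n, ∀ z ∈ ball (0 : Fin k → ℂ) r0, f n z ∈ closedBall (0 : Fin k → ℂ) κ :=
    fun n z hz => mem_closedBall_zero_iff.mpr (hfz n z (hballs z hz))
  refine ⟨hfk, ?_⟩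
  obtain ⟨b, hb, hbf⟩ := exists_b h0 hΛ hΛ1 hθ0 hθ1 hθ hr1 hrs hm hκ1 hκs.le hδ1.le hδ0.le hη0.le
    (by
      rw [← hCr, ← hK]
      refine le_trans ?_ hδ6.le
      have : η + δ ≤ 2 * δ := by linarith
      calc Λ * (K * (η + δ)) * Cr ≤ Λ * (K * (2 * δ)) * Cr := by gcongr
        _ = _ := by ring)
    (by
      rw [← hCr]
      refine le_trans (le_of_eq ?_) hη3.le
      ring) f hf hfz hfl
  have hfe := fun n => functional_eq h0 hΛ hr1 hrs hm hκ1 hκs.le hδ1.le hδ0.le hη0.le (hf n)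
    (hfz n) (hfl n) (hb n) (hb (n + 1)) (hbf n)
  choose τ hτd hτl hτr hτs using fun n => tmap_inv h0 h1 hm hδ0.le hδ2.le (by linarith) (hb n)
  let u : ℕ → (Fin k → ℂ) → (Fin k → ℂ) := fun n => ev (Sres lam)ᶜ (b n)
  have hud : ∀ n, DifferentiableOn ℂ (u n) (ball 0 r0) := fun n =>
    (ev_differentiableOn (hTu lam) zero_le_one (b n)).mono (ball_subset_ball hr01.le)
  have hul : ∀ n x y, ‖x‖ < r0 → ‖y‖ < r0 → ‖u n x - u n y‖ ≤ 1 / 2 * ‖x - y‖ := by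
    intro n x y hx hy
    refine (ev_lip (hTu lam) zero_le_one (b n) hr01 hx.le hy.le).trans ?_
    refine mul_le_mul_of_nonneg_right (le_trans ?_ hδ4.le) (norm_nonneg _)
    rw [mul_one]
    have : 0 < 1 - r0 := by linarith
    exact mul_le_mul_of_nonneg_left (hb n) (by positivity)
  have hun : ∀ n x, ‖x‖ < r0 → ‖u n x‖ ≤ δ := by
    intro n x hx
    have := ev_norm_le (hTu lam) zero_le_one (b n) (hx.le.trans hr01.le)
    rw [one_mul] at this
    exact this.trans (hb n)
  choose g hgd hg using fun n => perturb (R' := 1 / 2) (hud n) (hul n) (hun n) (by linarith) hδ0.le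
  have horb : ∀ j i x, ‖muv lam ^ (i + j) * x‖ < 1 / 2 →
      ‖muv lam ^ i * seqComp τ j x‖ < 1 / 2 := by
    intro j
    induction j with
    | zero => intro i x hx; exact hx
    | succ j ih =>
      intro i x hx
      refine hτs j i _ (ih (i + 1) x ?_)
      rwa [show i + 1 + j = i + (j + 1) by ring]
  refine assembly (τ := τ) (τi := fun n => tmap lam (b n)) (h := fun n z => z + u n z) (hinv := g)
    (V := ball 0 (1 / 2)) hf hfi hl hr hτd (fun n => tmap_diff hm (b n)) hτr hτl
    isOpen_ball isOpen_ball (fun n z hz => closedBall_subset_ball hκr (hfk n z hz)) ?_ ?_ ?_ hgd ?_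
    (fun n w hw => (hg n w hw).2) ?_
  · intro n z hz
    have hz1 : ‖z‖ ≤ 1 := (mem_ball_zero_iff.mp hz).le.trans hr01.le
    have e := hfe n z hz1
    change f n z + u (n + 1) (f n z) = τ n (z + u n z)
    have e2 : z + u n z = tmap lam (b n) (f n z + u (n + 1) (f n z)) := e
    rw [e2, hτl]
  · intro n
    exact differentiableOn_id.add (hud n)
  · intro n x hx y hy hxy
    have e1 := hul n x y (mem_ball_zero_iff.mp hx) (mem_ball_zero_iff.mp hy)
    have hxy' : x + u n x = y + u n y := hxy
    have e3 : x - y = -(u n x - u n y) := by linear_combination hxy'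
    rw [← norm_neg, ← e3] at e1
    have e4 : ‖x - y‖ ≤ 0 := by linarith
    rw [← sub_eq_zero]
    exact norm_le_zero_iff.mp e4
  · intro n w hw
    have e1 := (hg n w hw).1
    have e2 := mem_ball_zero_iff.mp hw
    exact mem_ball_zero_iff.mpr (by linarith)
  · intro w
    have t1 : Tendsto (fun n => ‖muv lam‖ ^ n * ‖w‖) atTop (𝓝 0) := by
      simpa using (tendsto_pow_atTop_nhds_zero_of_lt_one hμ0 hμ1).mul_const ‖w‖
    obtain ⟨n, hn, hn1⟩ := ((t1.eventually_lt_const (by norm_num : (0 : ℝ) < 1 / 2)).and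
      (eventually_ge_atTop 1)).exists
    obtain ⟨n, rfl⟩ : ∃ l, n = l + 1 := ⟨n - 1, by omega⟩
    refine ⟨n, mem_ball_zero_iff.mpr ?_⟩
    have := horb (n + 1) 0 w (by
      rw [zero_add]
      refine lt_of_le_of_lt ((norm_mul_le _ _).trans ?_) hn
      exact mul_le_mul_of_nonneg_right (norm_pow_le' _ (by omega)) (norm_nonneg _))
    simpa using this

theorem seqComp_conj {α β : Type*} (D : α ≃ β) (f : ℕ → α → α) (n : ℕ) (x : α) :
    seqComp (fun n z => D (f n (D.symm z))) n (D x) = D (seqComp f n x) := by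
  induction n with
  | zero => rfl
  | succ n ih =>
    change D (f n (D.symm (seqComp (fun n z => D (f n (D.symm z))) n (D x)))) =
      D (f n (seqComp f n x))
    rw [ih, D.symm_apply_apply]

theorem transfer {k : ℕ} (D : Ck k ≃L[ℂ] (Fin k → ℂ)) (f : ℕ → Ck k → Ck k) {r0 κ : ℝ}
    (hr0 : 0 < r0) (hκ : κ < r0)
    (hfk : ∀ n, ∀ z ∈ ball (0 : Fin k → ℂ) r0, D (f n (D.symm z)) ∈ closedBall (0 : Fin k → ℂ) κ)
    (hbi : ∃ (Ψ Φ : (Fin k → ℂ) → (Fin k → ℂ)),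
          DifferentiableOn ℂ Ψ (⋃ n : ℕ, seqComp (fun n z => D (f n (D.symm z))) (n + 1) ⁻¹' (ball 0 r0)) ∧
          Differentiable ℂ Φ ∧ (∀ w, Φ w ∈ (⋃ n : ℕ, seqComp (fun n z => D (f n (D.symm z))) (n + 1) ⁻¹' (ball 0 r0))) ∧
          (∀ z ∈ (⋃ n : ℕ, seqComp (fun n z => D (f n (D.symm z))) (n + 1) ⁻¹' (ball 0 r0)), Φ (Ψ z) = z) ∧
          (∀ w, Ψ (Φ w) = w)) :
    ∃ N : Set (Ck k), IsOpen N ∧ (0 : Ck k) ∈ N ∧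
        (∀ n, closure (f n '' N) ⊆ N ∧ IsCompact (closure (f n '' N))) ∧
        BiholoToC (⋃ n : ℕ, seqComp f (n + 1) ⁻¹' N) := by
  have hcl : ∀ n, closure (f n '' (D ⁻¹' ball 0 r0)) ⊆ D ⁻¹' closedBall 0 κ := by
    intro n
    refine closure_minimal ?_ (isClosed_closedBall.preimage D.continuous)
    rintro _ ⟨x, hx, rfl⟩
    have := hfk n (D x) hx
    rwa [D.symm_apply_apply] at this
  have hcpt : IsCompact (D ⁻¹' closedBall (0 : Fin k → ℂ) κ) := by
    have := (isCompact_closedBall (0 : Fin k → ℂ) κ).image D.symm.continuous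
    rwa [D.symm.image_eq_preimage_symm] at this
  have hmem : ∀ x, x ∈ (⋃ n : ℕ, seqComp f (n + 1) ⁻¹' (D ⁻¹' ball 0 r0)) ↔
      D x ∈ (⋃ n : ℕ, seqComp (fun n z => D (f n (D.symm z))) (n + 1) ⁻¹' (ball 0 r0)) := by
    intro x
    simp only [Set.mem_iUnion, Set.mem_preimage]
    refine exists_congr fun n => ?_
    have := seqComp_conj D.toEquiv f (n + 1) x
    rw [show seqComp (fun n z => D (f n (D.symm z))) (n + 1) (D x) = D (seqComp f (n + 1) x)
      from this]
  refine ⟨D ⁻¹' ball 0 r0, isOpen_ball.preimage D.continuous, ?_, ?_, ?_⟩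
  · simpa using hr0
  · intro n
    refine ⟨fun x hx => closedBall_subset_ball hκ (hcl n hx), ?_⟩
    exact hcpt.of_isClosed_subset isClosed_closure (hcl n)
  · obtain ⟨Ψ, Φ, hΨ, hΦ, h1, h2, h3⟩ := hbi
    refine ⟨fun x => D.symm (Ψ (D x)), fun x => D.symm (Φ (D x)), ?_, ?_, ?_, ?_, ?_⟩
    · refine D.symm.differentiable.comp_differentiableOn (hΨ.comp D.differentiable.differentiableOn ?_)
      intro x hx
      exact (hmem x).mp hx
    · exact D.symm.differentiable.comp (hΦ.comp D.differentiable)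
    · intro w
      rw [hmem, D.apply_symm_apply]
      exact h1 _
    · intro z hz
      change D.symm (Φ (D (D.symm (Ψ (D z))))) = z
      rw [D.apply_symm_apply, h2 _ ((hmem z).mp hz), D.symm_apply_apply]
    · intro w
      change D.symm (Ψ (D (D.symm (Φ (D w))))) = w
      rw [D.apply_symm_apply, h3, D.symm_apply_apply]

theorem linear_close {k : ℕ} {A : Ck k →ₗ[ℂ] Ck k} {lam : Fin k → ℂ} {η : ℝ}
    (b : Module.Basis (Fin k) ℂ (Ck k))
    (hb : ∀ i j, ‖b.repr (A (b j)) i - (if i = j then lam j else 0)‖ ≤ η) (v : Ck k) (hη : 0 ≤ η) :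
    ‖b.equivFun (A v) - lam * b.equivFun v‖ ≤ k * η * ‖b.equivFun v‖ := by
  rw [pi_norm_le_iff_of_nonneg (by positivity)]
  intro i
  have e : (b.equivFun (A v) - lam * b.equivFun v) i =
      ∑ j, b.equivFun v j * (b.repr (A (b j)) i - (if i = j then lam j else 0)) := by
    have h : b.equivFun (A v) i = ∑ j, b.equivFun v j * b.repr (A (b j)) i := by
      conv_lhs => rw [← b.sum_equivFun v]
      simp only [map_sum, map_smul, Finset.sum_apply, Pi.smul_apply, smul_eq_mul]
      rfl
    rw [Pi.sub_apply, h]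
    simp only [mul_sub, Finset.sum_sub_distrib]
    congr 1
    simp [mul_comm]
  rw [e]
  refine (norm_sum_le _ _).trans ?_
  calc _ ≤ ∑ j : Fin k, ‖b.equivFun v‖ * η := by
        refine Finset.sum_le_sum fun j _ => ?_
        rw [norm_mul]
        exact mul_le_mul (norm_le_pi_norm (b.equivFun v) j) (hb i j) (norm_nonneg _) (norm_nonneg _)
    _ = _ := by simp; ring

/-- **Main Theorem.** Let `F` be an automorphism of `ℂ^k` with an attracting fixed point at `0`
(i.e. all eigenvalues of `F'(0)` have absolute value `< 1`). Then there exists `ε > 0` such that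
for every sequence `f_0, f_1, …` of automorphisms with `‖F z - f_n z‖ < ε` on the unit ball,
there is an open neighborhood `N` of `0` with `closure (f_n '' N)` a compact subset of `N` for
every `n`, and the basin of attraction `⋃_{n ≥ 1} f(n)⁻¹(N)` is biholomorphic to `ℂ^k`. -/
theorem main_theorem (k : ℕ) (hk : 1 ≤ k) (F : Ck k → Ck k)
    (hF : IsAutomorphism F) (hF0 : F 0 = 0)
    (hattr : ∀ μ : ℂ, Module.End.HasEigenvalue ((fderiv ℂ F 0).toLinearMap) μ → ‖μ‖ < 1) :
    ∃ ε : ℝ, 0 < ε ∧ ∀ f : ℕ → Ck k → Ck k, (∀ n, IsAutomorphism (f n)) →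
      (∀ n, ∀ z ∈ ball (0 : Ck k) 1, ‖F z - f n z‖ < ε) →
      ∃ N : Set (Ck k), IsOpen N ∧ (0 : Ck k) ∈ N ∧
        (∀ n, closure (f n '' N) ⊆ N ∧ IsCompact (closure (f n '' N))) ∧
        BiholoToC (⋃ n : ℕ, seqComp f (n + 1) ⁻¹' N) := by
  obtain ⟨hFd, Fi, hFid, hFl, hFr⟩ := hF
  have hA : HasFDerivAt F (fderiv ℂ F 0) 0 := (hFd 0).hasFDerivAt
  set A := fderiv ℂ F 0 with hAdef
  have hAinj : ∀ v, A v = 0 → v = 0 := by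
    intro v hv
    have h1 : HasFDerivAt Fi (fderiv ℂ Fi (F 0)) (F 0) := (hFid _).hasFDerivAt
    have h2 := h1.comp 0 hA
    have h3 : Fi ∘ F = id := funext hFl
    rw [h3] at h2
    have h4 := h2.unique (hasFDerivAt_id 0)
    have h5 := congrArg (fun B : Ck k →L[ℂ] Ck k => B v) h4
    simpa [hv] using h5.symm
  obtain ⟨lam, hlam, hbasis⟩ := exists_almost_diag (n := k) (V := Ck k) (by simp) A.toLinearMap
  have h0 : ∀ j, lam j ≠ 0 := by
    intro j hj
    obtain ⟨v, hv⟩ := (hlam j).exists_hasEigenvector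
    refine hv.2 (hAinj v ?_)
    have := hv.apply_eq_smul
    rw [hj, zero_smul] at this
    exact this
  have h1 : ‖lam‖ < 1 := by
    rw [pi_norm_lt_iff zero_lt_one]
    exact fun j => hattr _ (hlam j)
  obtain ⟨s, η, r0, κ, hs, hη, hr0, hκ, hcore⟩ := core lam h0 h1
  obtain ⟨b, hb⟩ := hbasis (η / (2 * (k + 1) * s)) (by positivity)
  let C : Ck k ≃L[ℂ] (Fin k → ℂ) := b.equivFun.toContinuousLinearEquiv
  set nC := ‖(C : Ck k →L[ℂ] (Fin k → ℂ))‖ with hnC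
  set nL := ‖(C.symm : (Fin k → ℂ) →L[ℂ] Ck k)‖ with hnL
  have hC : ∀ v, ‖C v‖ ≤ nC * ‖v‖ := fun v => (C : Ck k →L[ℂ] (Fin k → ℂ)).le_opNorm v
  have hL : ∀ v, ‖C.symm v‖ ≤ nL * ‖v‖ :=
    fun v => (C.symm : (Fin k → ℂ) →L[ℂ] Ck k).le_opNorm v
  have hnC0 : 0 ≤ nC := norm_nonneg _
  have hnL0 : 0 ≤ nL := norm_nonneg _
  obtain ⟨c, hc, hc0⟩ := ((ev_small (nC * nL * s) (by positivity : 0 < η / 4)).and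
    self_mem_nhdsWithin).exists
  have hc0 : 0 < c := hc0
  have hlo := hA.isLittleO.def hc0
  obtain ⟨d, hd, hball⟩ := Metric.eventually_nhds_iff_ball.mp hlo
  obtain ⟨t, ⟨ht1, ht2⟩, ht0⟩ := (((ev_small (nL * s) hd).and (ev_small (nL * s) one_pos)).and
    self_mem_nhdsWithin).exists
  have ht0 : 0 < t := ht0
  have htc : (t : ℂ) ≠ 0 := by exact_mod_cast ht0.ne'
  obtain ⟨ε, hε, hε0⟩ := ((ev_small (t⁻¹ * nC) (by positivity : 0 < η / 4)).and
    self_mem_nhdsWithin).exists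
  have hε0 : 0 < ε := hε0
  refine ⟨ε, hε0, ?_⟩
  intro f hf hclose
  choose hfd fi hfid hfl hfr using hf
  let D : Ck k ≃L[ℂ] (Fin k → ℂ) :=
    (C.toLinearEquiv.trans (LinearEquiv.smulOfNeZero ℂ (Fin k → ℂ) ((t : ℂ)⁻¹)
      (inv_ne_zero htc))).toContinuousLinearEquiv
  have hD : ∀ v, D v = (t : ℂ)⁻¹ • C v := fun v => rfl
  have hDs : ∀ z, D.symm z = (t : ℂ) • C.symm z := by
    intro z
    rw [D.symm_apply_eq, hD]
    rw [map_smul, C.apply_symm_apply, smul_smul, inv_mul_cancel₀ htc, one_smul]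
  have hnt : ‖(t : ℂ)‖ = t := by rw [Complex.norm_real, Real.norm_of_nonneg ht0.le]
  have hest : ∀ n, ∀ z ∈ ball (0 : Fin k → ℂ) s, ‖D (f n (D.symm z)) - lam * z‖ ≤ η := by
    intro n z hz
    have hz' := mem_ball_zero_iff.mp hz
    set v := D.symm z with hv
    have hvn : ‖v‖ ≤ t * (nL * s) := by
      rw [hv, hDs, norm_smul, hnt]
      refine mul_le_mul_of_nonneg_left ((hL z).trans ?_) ht0.le
      exact mul_le_mul_of_nonneg_left hz'.le hnL0
    have hCv : C v = (t : ℂ) • z := by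
      rw [hv, hDs, map_smul, C.apply_symm_apply]
    have E1 : ‖D (f n v) - D (F v)‖ ≤ η / 4 := by
      rw [← map_sub, hD, norm_smul, norm_inv, hnt]
      have := hclose n v (mem_ball_zero_iff.mpr (by linarith))
      rw [norm_sub_rev] at this
      calc _ ≤ t⁻¹ * (nC * ‖f n v - F v‖) := mul_le_mul_of_nonneg_left (hC _) (by positivity)
        _ ≤ t⁻¹ * (nC * ε) := by gcongr
        _ ≤ _ := by linarith
    have E2 : ‖D (F v) - D (A v)‖ ≤ η / 4 := by
      rw [← map_sub, hD, norm_smul, norm_inv, hnt]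
      have := hball v (mem_ball_zero_iff.mpr (by linarith))
      rw [hF0, sub_zero, sub_zero] at this
      calc _ ≤ t⁻¹ * (nC * ‖F v - A v‖) := mul_le_mul_of_nonneg_left (hC _) (by positivity)
        _ ≤ t⁻¹ * (nC * (c * (t * (nL * s)))) := by
          gcongr
          exact this.trans (mul_le_mul_of_nonneg_left hvn hc0.le)
        _ = nC * nL * s * c := by field_simp
        _ ≤ _ := hc.le
    have E3 : ‖D (A v) - lam * z‖ ≤ η / 2 := by
      have h5 := linear_close (A := A.toLinearMap) b hb v (by positivity)
      have h6 : D (A v) - lam * z = (t : ℂ)⁻¹ • (C (A v) - lam * C v) := by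
        rw [hCv, hD, smul_sub, mul_smul_comm, smul_smul, inv_mul_cancel₀ htc, one_smul]
      have h7 : ‖C (A v) - lam * C v‖ ≤ k * (η / (2 * (k + 1) * s)) * ‖C v‖ := h5
      rw [h6, norm_smul, norm_inv, hnt]
      rw [hCv, norm_smul, hnt] at h7
      rw [hCv]
      calc _ ≤ t⁻¹ * (k * (η / (2 * (k + 1) * s)) * (t * ‖z‖)) :=
            mul_le_mul_of_nonneg_left h7 (by positivity)
        _ ≤ t⁻¹ * (k * (η / (2 * (k + 1) * s)) * (t * s)) := by gcongr
        _ = (k / (k + 1) : ℝ) * (η / 2) := by field_simp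
        _ ≤ 1 * (η / 2) := by
          refine mul_le_mul_of_nonneg_right ?_ (by positivity)
          rw [div_le_one (by positivity)]
          linarith
        _ = _ := by ring
    calc ‖D (f n v) - lam * z‖ = ‖(D (f n v) - D (F v)) + (D (F v) - D (A v)) +
          (D (A v) - lam * z)‖ := by congr 1; ring
      _ ≤ _ := norm_add₃_le
      _ ≤ η := by linarith
  obtain ⟨hfk, hbi⟩ := hcore (fun n z => D (f n (D.symm z))) (fun n z => D (fi n (D.symm z)))
    (fun n => D.differentiable.comp ((hfd n).comp D.symm.differentiable))
    (fun n => D.differentiable.comp ((hfid n).comp D.symm.differentiable))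
    (fun n z => by
      change D (fi n (D.symm (D (f n (D.symm z))))) = z
      rw [D.symm_apply_apply, hfl n, D.apply_symm_apply])
    (fun n z => by
      change D (f n (D.symm (D (fi n (D.symm z))))) = z
      rw [D.symm_apply_apply, hfr n, D.apply_symm_apply]) hest
  exact transfer D f hr0 hκ hfk hbi
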